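/- arXiv:2404.13763 — 2 statements merged into one kernel-verified Lean document; each statement's English description precedes it below -/
import Mathlib

section
/- For all integers b ≥ 2, as b → ∞, I(b,0,2) = b·log b + ζ(2)/(2b⁵) + ζ(2)/b⁶ − ζ(3)/(2b⁷) − (15ζ(2) + 8ζ(3) − 3ζ(4))/(6b⁸) + O(b⁻⁹). -/
open Filter Asymptotics

/-- The Irwin harmonic sum `I(b,d,k)`: sum of `1/m` over positive integers `m`
whose base-`b` digit list contains the digit `d` exactly `k` times. -/
noncomputable def irwinSum (b d k : ℕ) : ℝ :=
  ∑' m : ℕ, if 0 < m ∧ (Nat.digits b m).count d = k then (1 : ℝ) / m else 0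

/-- `ζ(s) = ∑_{n ≥ 1} n^{-s}` for an integer exponent. -/
noncomputable def zetaR (s : ℕ) : ℝ := ∑' n : ℕ, 1 / ((n : ℝ) + 1) ^ s

/-- Sum over the appended nonzero digits. -/
noncomputable def topT (b : ℕ) (f : ℕ → ℝ) (n : ℕ) : ℝ :=
  ∑ a ∈ Finset.range (b - 1), f (b * n + (a + 1))

/-- Level sums: sum of reciprocals of the integers obtained from `n` by appending `l` digits,
exactly `k` of which are zero. -/
noncomputable def lev (b : ℕ) : ℕ → ℕ → ℕ → ℝ
  | 0, 0, n => 1 / (n : ℝ)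
  | 0, _ + 1, _ => 0
  | l + 1, 0, n => topT b (lev b l 0) n
  | l + 1, k + 1, n => topT b (lev b l (k + 1)) n + lev b l k (b * n)

lemma topT_mono {b : ℕ} {f g : ℕ → ℝ} (hb : 2 ≤ b) (h : ∀ m, 1 ≤ m → f m ≤ g m) (n : ℕ) :
    topT b f n ≤ topT b g n := by
  unfold topT
  exact Finset.sum_le_sum fun a _ => h _ (by omega)

lemma lev_nonneg (b : ℕ) : ∀ l k n, 0 ≤ lev b l k n := by
  intro l
  induction l with
  | zero => intro k n; cases k <;> simp [lev]
  | succ l ih =>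
    intro k n
    cases k with
    | zero => simp only [lev, topT]; exact Finset.sum_nonneg fun a _ => ih _ _
    | succ k =>
      simp only [lev, topT]
      exact add_nonneg (Finset.sum_nonneg fun a _ => ih _ _) (ih _ _)

lemma topT_pow_le {b : ℕ} (hb : 2 ≤ b) (s : ℕ) {n : ℕ} (hn : 1 ≤ n) :
    topT b (fun m => 1 / (m : ℝ) ^ s) n ≤ ((b : ℝ) - 1) / (b : ℝ) ^ s * (1 / (n : ℝ) ^ s) := by
  unfold topT
  have hb0 : (0 : ℝ) < b := by positivity
  have hn0 : (0 : ℝ) < n := by positivity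
  calc _ ≤ ∑ a ∈ Finset.range (b - 1), 1 / ((b : ℝ) * n) ^ s := by
        apply Finset.sum_le_sum
        intro a _
        apply one_div_le_one_div_of_le (by positivity)
        apply pow_le_pow_left₀ (by positivity)
        push_cast
        have : (0 : ℝ) ≤ a := by positivity
        linarith
    _ = _ := by
        rw [Finset.sum_const, Finset.card_range, nsmul_eq_mul, Nat.cast_sub (by omega), mul_pow]
        push_cast
        field_simp

lemma sum_topT (b : ℕ) (L : ℕ) (f : ℕ → ℕ → ℝ) (n : ℕ) :
    ∑ l ∈ Finset.range L, topT b (f l) n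
      = topT b (fun m => ∑ l ∈ Finset.range L, f l m) n := by
  unfold topT
  exact Finset.sum_comm

lemma topT_mul (b : ℕ) (c : ℝ) (f : ℕ → ℝ) (n : ℕ) :
    topT b (fun m => c * f m) n = c * topT b f n := by
  unfold topT; rw [Finset.mul_sum]

lemma topT_add (b : ℕ) (f g : ℕ → ℝ) (n : ℕ) :
    topT b (fun m => f m + g m) n = topT b f n + topT b g n := by
  unfold topT; rw [Finset.sum_add_distrib]

lemma topT_sub (b : ℕ) (f g : ℕ → ℝ) (n : ℕ) :
    topT b (fun m => f m - g m) n = topT b f n - topT b g n := by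
  unfold topT; rw [Finset.sum_sub_distrib]

lemma levsum_le {b : ℕ} (hb : 2 ≤ b) : ∀ L k n, 1 ≤ n →
    ∑ l ∈ Finset.range L, lev b l k n ≤ b / (n : ℝ) := by
  intro L
  have hb0 : (0 : ℝ) < b := by positivity
  induction L with
  | zero => intro k n hn; simp; positivity
  | succ L ih =>
    intro k n hn
    have hn0 : (0 : ℝ) < n := by positivity
    have key : ∀ k, topT b (fun m => ∑ l ∈ Finset.range L, lev b l k m) n ≤ ((b : ℝ) - 1) / n := by
      intro k
      calc _ ≤ topT b (fun m => (b : ℝ) * (1 / (m : ℝ) ^ 1)) n := by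
            apply topT_mono hb
            intro m hm
            have := ih k m hm
            simpa [div_eq_mul_inv] using this
        _ = (b : ℝ) * topT b (fun m => (1 / (m : ℝ) ^ 1)) n := topT_mul _ _ _ _
        _ ≤ (b : ℝ) * (((b : ℝ) - 1) / (b : ℝ) ^ 1 * (1 / (n : ℝ) ^ 1)) := by
            gcongr
            exact topT_pow_le hb 1 hn
        _ = _ := by field_simp
    rw [Finset.sum_range_succ']
    cases k with
    | zero =>
      simp only [lev]
      rw [sum_topT]
      have := key 0
      have e : (b : ℝ) / n = ((b : ℝ) - 1) / n + 1 / n := by ring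
      linarith
    | succ k =>
      simp only [lev]
      rw [Finset.sum_add_distrib, sum_topT]
      have h1 := key (k + 1)
      have h2 := ih k (b * n) (Nat.mul_pos (by omega) hn)
      have e : (b : ℝ) / n = ((b : ℝ) - 1) / n + 1 / n := by ring
      have e2 : (b : ℝ) / ((b * n : ℕ) : ℝ) = 1 / n := by push_cast; field_simp
      linarith

/-- Full sums over appended digit strings. -/
noncomputable def UU (b k n : ℕ) : ℝ := ∑' l, lev b l k n

lemma lev_summable {b : ℕ} (hb : 2 ≤ b) (k : ℕ) {n : ℕ} (hn : 1 ≤ n) :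
    Summable fun l => lev b l k n :=
  summable_of_sum_range_le (fun l => lev_nonneg b l k n) (fun L => levsum_le hb L k n hn)

lemma UU_nonneg (b k n : ℕ) : 0 ≤ UU b k n := tsum_nonneg fun l => lev_nonneg b l k n

lemma UU_le {b : ℕ} (hb : 2 ≤ b) (k : ℕ) {n : ℕ} (hn : 1 ≤ n) : UU b k n ≤ b / (n : ℝ) :=
  Real.tsum_le_of_sum_range_le (fun l => lev_nonneg b l k n) (fun L => levsum_le hb L k n hn)

lemma tsum_topT {b : ℕ} (hb : 2 ≤ b) (k n : ℕ) :
    HasSum (fun l => topT b (lev b l k) n) (topT b (UU b k) n) := by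
  unfold topT
  apply hasSum_sum
  intro a _
  exact (lev_summable hb k (by omega)).hasSum

lemma UU_zero {b : ℕ} (hb : 2 ≤ b) {n : ℕ} (hn : 1 ≤ n) :
    UU b 0 n = 1 / (n : ℝ) + topT b (UU b 0) n := by
  have h := (lev_summable hb 0 hn).tsum_eq_zero_add
  unfold UU at *
  rw [h]
  simp only [lev]
  rw [(tsum_topT hb 0 n).tsum_eq]
  rfl

lemma UU_succ {b : ℕ} (hb : 2 ≤ b) (k : ℕ) {n : ℕ} (hn : 1 ≤ n) :
    UU b (k + 1) n = UU b k (b * n) + topT b (UU b (k + 1)) n := by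
  have h := (lev_summable hb (k + 1) hn).tsum_eq_zero_add
  have h1 := tsum_topT hb (k + 1) n
  have h2 := (lev_summable hb k (n := b * n) (Nat.mul_pos (by omega) hn)).hasSum
  have h3 := (h1.add h2).tsum_eq
  rw [show UU b (k + 1) n = _ from h]
  simp only [lev]
  rw [h3]
  unfold UU
  ring

lemma sum_range_mul_nat (f : ℕ → ℝ) (p q : ℕ) :
    ∑ r ∈ Finset.range (p * q), f r
      = ∑ i ∈ Finset.range p, ∑ j ∈ Finset.range q, f (i * q + j) := by
  induction p with
  | zero => simp
  | succ p ih => rw [Nat.succ_mul, Finset.sum_range_add, ih, Finset.sum_range_succ]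

lemma count_append {b : ℕ} (hb : 2 ≤ b) {n a : ℕ} (hn : 1 ≤ n) (ha : a < b) :
    (Nat.digits b (b * n + a)).count 0
      = (Nat.digits b n).count 0 + if a = 0 then 1 else 0 := by
  rw [add_comm (b * n) a, Nat.digits_add b (by omega) a n ha (Or.inr (by omega)), List.count_cons]
  simp

lemma lev_block {b : ℕ} (hb : 2 ≤ b) : ∀ l k n, 1 ≤ n →
    ∑ r ∈ Finset.range (b ^ l),
      (if (Nat.digits b (n * b ^ l + r)).count 0 = k then (1 : ℝ) / ((n * b ^ l + r : ℕ) : ℝ) else 0)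
      = if (Nat.digits b n).count 0 ≤ k then lev b l (k - (Nat.digits b n).count 0) n else 0 := by
  intro l
  induction l with
  | zero =>
    intro k n hn
    simp only [pow_zero, Finset.range_one, Finset.sum_singleton, mul_one, add_zero]
    rcases lt_trichotomy ((Nat.digits b n).count 0) k with h | h | h
    · rw [if_neg h.ne, if_pos h.le]
      obtain ⟨j, hj⟩ : ∃ j, k - (Nat.digits b n).count 0 = j + 1 :=
        ⟨k - (Nat.digits b n).count 0 - 1, by omega⟩
      rw [hj]; simp [lev]
    · rw [if_pos h, if_pos h.le, h, Nat.sub_self]; simp [lev]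
    · rw [if_neg h.ne', if_neg (by omega)]
  | succ l ih =>
    intro k n hn
    rw [pow_succ', sum_range_mul_nat]
    have hcong : ∀ i ∈ Finset.range b, (∑ j ∈ Finset.range (b ^ l),
        (if (Nat.digits b (n * (b * b ^ l) + (i * b ^ l + j))).count 0 = k then
          (1 : ℝ) / ((n * (b * b ^ l) + (i * b ^ l + j) : ℕ) : ℝ) else 0))
        = if (Nat.digits b (b * n + i)).count 0 ≤ k then
            lev b l (k - (Nat.digits b (b * n + i)).count 0) (b * n + i) else 0 := by
      intro i _
      have hpos : 1 ≤ b * n + i := by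
        have := Nat.mul_pos (show 0 < b by omega) hn
        omega
      rw [← ih k (b * n + i) hpos]
      have e : ∀ j, n * (b * b ^ l) + (i * b ^ l + j) = (b * n + i) * b ^ l + j := by
        intro j; ring
      simp only [e]
    rw [Finset.sum_congr rfl hcong]
    obtain ⟨c, rfl⟩ : ∃ c, b = c + 1 := ⟨b - 1, by omega⟩
    rw [Finset.sum_range_succ']
    have h0 := count_append hb hn (show 0 < c + 1 by omega)
    simp only [if_true] at h0
    rw [h0]
    have hs : ∀ a ∈ Finset.range c, (if (Nat.digits (c + 1) ((c + 1) * n + (a + 1))).count 0 ≤ k then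
            lev (c + 1) l (k - (Nat.digits (c + 1) ((c + 1) * n + (a + 1))).count 0)
              ((c + 1) * n + (a + 1)) else 0)
        = if (Nat.digits (c + 1) n).count 0 ≤ k then
            lev (c + 1) l (k - (Nat.digits (c + 1) n).count 0) ((c + 1) * n + (a + 1)) else 0 := by
      intro a ha
      rw [count_append hb hn (by have := Finset.mem_range.1 ha; omega)]
      simp
    rw [Finset.sum_congr rfl hs]
    generalize (Nat.digits (c + 1) n).count 0 = z
    rcases lt_trichotomy z k with h | h | h
    · obtain ⟨j, rfl⟩ : ∃ j, k = z + (j + 1) := ⟨k - z - 1, by omega⟩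
      have e1 : z + (j + 1) - z = j + 1 := by omega
      have e2 : z + (j + 1) - (z + 1) = j := by omega
      rw [if_pos (by omega), if_pos (by omega), e1, e2]
      simp only [lev, topT, add_zero, Nat.add_sub_cancel]
      congr 1
      apply Finset.sum_congr rfl
      intro a _
      rw [if_pos (by omega)]
    · subst h
      rw [if_neg (by omega), if_pos le_rfl, Nat.sub_self]
      simp [lev, topT]
    · rw [if_neg (by omega), if_neg (by omega)]
      simp [show ¬ z ≤ k by omega]

lemma irwin_partial {b : ℕ} (hb : 2 ≤ b) (k L : ℕ) :
    ∑ m ∈ Finset.range (b ^ L),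
      (if 0 < m ∧ (Nat.digits b m).count 0 = k then (1 : ℝ) / m else 0)
    = ∑ l ∈ Finset.range L, ∑ a ∈ Finset.range (b - 1), lev b l k (a + 1) := by
  induction L with
  | zero => simp
  | succ L ih =>
    rw [Finset.sum_range_succ, ← ih, pow_succ', sum_range_mul_nat]
    obtain ⟨c, rfl⟩ : ∃ c, b = c + 1 := ⟨b - 1, by omega⟩
    rw [Finset.sum_range_succ', add_comm]
    congr 1
    · simp
    · simp only [Nat.add_sub_cancel]
      apply Finset.sum_congr rfl
      intro a ha
      have ha2 := Finset.mem_range.1 ha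
      have h := lev_block hb L k (a + 1) (by omega)
      have hc : (Nat.digits (c + 1) (a + 1)).count 0 = 0 := by
        rw [Nat.digits_of_lt _ _ (by omega) (by omega)]
        simp
      rw [hc] at h
      simp only [Nat.zero_le, if_true, Nat.sub_zero] at h
      rw [← h]
      apply Finset.sum_congr rfl
      intro j _
      have : 0 < (a + 1) * (c + 1) ^ L + j := by positivity
      simp only [this, true_and]

lemma irwin_eq {b : ℕ} (hb : 2 ≤ b) (k : ℕ) :
    irwinSum b 0 k = ∑ a ∈ Finset.range (b - 1), UU b k (a + 1) := by
  have hpos : ∀ m : ℕ, 0 ≤ (if 0 < m ∧ (Nat.digits b m).count 0 = k then (1 : ℝ) / m else 0) := by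
    intro m; split_ifs <;> positivity
  have hlim : Tendsto (fun L => ∑ l ∈ Finset.range L, ∑ a ∈ Finset.range (b - 1), lev b l k (a + 1))
      atTop (nhds (∑ a ∈ Finset.range (b - 1), UU b k (a + 1))) := by
    apply HasSum.tendsto_sum_nat
    apply hasSum_sum
    intro a _
    exact (lev_summable hb k (by omega)).hasSum
  have hsum : Summable (fun m : ℕ => if 0 < m ∧ (Nat.digits b m).count 0 = k then (1 : ℝ) / m else 0) := by
    apply summable_of_sum_range_le (c := ∑ a ∈ Finset.range (b - 1), (b : ℝ) / ((a + 1 : ℕ) : ℝ)) hpos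
    intro M
    calc _ ≤ ∑ m ∈ Finset.range (b ^ M),
      (if 0 < m ∧ (Nat.digits b m).count 0 = k then (1 : ℝ) / m else 0) := by
          apply Finset.sum_le_sum_of_subset_of_nonneg
          · exact Finset.range_subset_range.2 (Nat.lt_pow_self (by omega)).le
          · intro i _ _; exact hpos i
      _ = _ := irwin_partial hb k M
      _ = ∑ a ∈ Finset.range (b - 1), ∑ l ∈ Finset.range M, lev b l k (a + 1) := Finset.sum_comm
      _ ≤ _ := Finset.sum_le_sum fun a _ => levsum_le hb M k (a + 1) (by omega)
  have h1 := hsum.hasSum.tendsto_sum_nat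
  have h2 := h1.comp (tendsto_pow_atTop_atTop_of_one_lt (r := b) (by omega))
  have h3 : ((fun n => ∑ m ∈ Finset.range n,
      (if 0 < m ∧ (Nat.digits b m).count 0 = k then (1 : ℝ) / m else 0)) ∘ fun L => b ^ L)
      = fun L => ∑ l ∈ Finset.range L, ∑ a ∈ Finset.range (b - 1), lev b l k (a + 1) := by
    funext L; exact irwin_partial hb k L
  rw [h3] at h2
  exact tendsto_nhds_unique h2 hlim

/-- The limiting function `b log (1 + 1/n)`. -/
noncomputable def LL (b n : ℕ) : ℝ := b * (Real.log ((n + 1 : ℕ) : ℝ) - Real.log (n : ℝ))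

/-- Deviations from the limiting function. -/
noncomputable def VV (b k n : ℕ) : ℝ := UU b k n - LL b n

lemma topT_LL {b : ℕ} (hb : 2 ≤ b) {n : ℕ} (hn : 1 ≤ n) :
    LL b n = LL b (b * n) + topT b (LL b) n := by
  obtain ⟨c, rfl⟩ : ∃ c, b = c + 1 := ⟨b - 1, by omega⟩
  have h := Finset.sum_range_sub (fun i : ℕ => Real.log (((c + 1) * n + i : ℕ) : ℝ)) (c + 1)
  have h2 : ∑ i ∈ Finset.range (c + 1), LL (c + 1) ((c + 1) * n + i) = LL (c + 1) n := by
    unfold LL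
    rw [← Finset.mul_sum]
    have : ∀ i, (c + 1) * n + i + 1 = (c + 1) * n + (i + 1) := fun i => by ring
    simp only [this]
    rw [h]
    congr 1
    have e : ((c + 1) * n + (c + 1) : ℕ) = (c + 1) * (n + 1) := by ring
    rw [e, add_zero, Nat.cast_mul, Nat.cast_mul, Real.log_mul, Real.log_mul]
    · ring
    all_goals positivity
  rw [Finset.sum_range_succ'] at h2
  rw [← h2]
  simp only [topT, Nat.add_sub_cancel, add_zero]
  ring

lemma VV_zero {b : ℕ} (hb : 2 ≤ b) {n : ℕ} (hn : 1 ≤ n) :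
    VV b 0 n = (1 / (n : ℝ) - LL b (b * n)) + topT b (VV b 0) n := by
  have h1 := UU_zero hb hn
  have h2 := topT_LL hb hn
  have h3 : topT b (VV b 0) n = topT b (UU b 0) n - topT b (LL b) n := topT_sub _ _ _ _
  rw [h3]; unfold VV; linarith

lemma VV_succ {b : ℕ} (hb : 2 ≤ b) (k : ℕ) {n : ℕ} (hn : 1 ≤ n) :
    VV b (k + 1) n = VV b k (b * n) + topT b (VV b (k + 1)) n := by
  have h1 := UU_succ hb k hn
  have h2 := topT_LL hb hn
  have h3 : topT b (VV b (k + 1)) n = topT b (UU b (k + 1)) n - topT b (LL b) n := topT_sub _ _ _ _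
  rw [h3]; unfold VV; linarith

lemma LL_eq (b : ℕ) {n : ℕ} (hn : 1 ≤ n) : LL b n = b * Real.log (1 + 1 / (n : ℝ)) := by
  unfold LL
  have hn0 : (0 : ℝ) < n := by positivity
  rw [← Real.log_div (by positivity) (by positivity)]
  congr 2
  push_cast
  field_simp

lemma VV_abs {b : ℕ} (hb : 2 ≤ b) (k : ℕ) {n : ℕ} (hn : 1 ≤ n) : |VV b k n| ≤ b / (n : ℝ) := by
  have h0 := UU_nonneg b k n
  have h1 := UU_le hb k hn
  have hn0 : (0 : ℝ) < n := by positivity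
  have h2 : 0 ≤ Real.log (1 + 1 / (n : ℝ)) := Real.log_nonneg (by simp)
  have h3 : Real.log (1 + 1 / (n : ℝ)) ≤ 1 / n := by
    have := Real.log_le_sub_one_of_pos (show 0 < 1 + 1 / (n : ℝ) by positivity)
    linarith
  have h4 : 0 ≤ LL b n := by rw [LL_eq b hn]; positivity
  have h5 : LL b n ≤ b / (n : ℝ) := by
    rw [LL_eq b hn]
    calc _ ≤ (b : ℝ) * (1 / n) := by gcongr
      _ = _ := by ring
  unfold VV
  rw [abs_le]
  constructor <;> linarith

lemma compare_aux {b : ℕ} (hb : 2 ≤ b) (D : ℕ → ℝ) (C : ℝ) (hC : 0 ≤ C)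
    (hD : ∀ n, 1 ≤ n → D n ≤ topT b D n) (hDC : ∀ n, 1 ≤ n → D n ≤ C / n) :
    ∀ n, 1 ≤ n → D n ≤ 0 := by
  have hb0 : (0 : ℝ) < b := by positivity
  have hb1 : (1 : ℝ) ≤ b := by exact_mod_cast (show 1 ≤ b by omega)
  set ρ : ℝ := ((b : ℝ) - 1) / b with hρ
  have hρ0 : 0 ≤ ρ := div_nonneg (by linarith) hb0.le
  have hρ1 : ρ < 1 := by rw [hρ, div_lt_one hb0]; linarith
  have key : ∀ j n, 1 ≤ n → D n ≤ C * ρ ^ j * (1 / (n : ℝ) ^ 1) := by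
    intro j
    induction j with
    | zero => intro n hn; have := hDC n hn; simpa [div_eq_mul_inv] using this
    | succ j ih =>
      intro n hn
      calc D n ≤ topT b D n := hD n hn
        _ ≤ topT b (fun m => C * ρ ^ j * (1 / (m : ℝ) ^ 1)) n := topT_mono hb (fun m hm => ih m hm) n
        _ = C * ρ ^ j * topT b (fun m => (1 / (m : ℝ) ^ 1)) n := topT_mul _ _ _ _
        _ ≤ C * ρ ^ j * (((b : ℝ) - 1) / (b : ℝ) ^ 1 * (1 / (n : ℝ) ^ 1)) := by
            gcongr
            exact topT_pow_le hb 1 hn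
        _ = _ := by rw [hρ]; ring
  intro n hn
  have ht : Tendsto (fun j => C * ρ ^ j * (1 / (n : ℝ) ^ 1)) atTop (nhds (C * 0 * (1 / (n : ℝ) ^ 1))) :=
    ((tendsto_pow_atTop_nhds_zero_of_lt_one hρ0 hρ1).const_mul C).mul_const _
  have := ge_of_tendsto' ht (fun j => key j n hn)
  simpa using this

lemma compare_super {b : ℕ} (hb : 2 ≤ b) (F G φ : ℕ → ℝ) (C : ℝ) (hC : 0 ≤ C)
    (hF : ∀ n, 1 ≤ n → F n = G n + topT b F n) (hFC : ∀ n, 1 ≤ n → |F n| ≤ C / n)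
    (hφ0 : ∀ n, 1 ≤ n → 0 ≤ φ n) (hφ : ∀ n, 1 ≤ n → topT b φ n ≤ φ n / 2)
    (hG : ∀ n, 1 ≤ n → |G n| ≤ φ n) :
    ∀ n, 1 ≤ n → |F n| ≤ 2 * φ n := by
  intro n hn
  rw [abs_le]
  have hs : ∀ n, topT b (fun m => 2 * φ m) n = 2 * topT b φ n := fun n => topT_mul _ _ _ _
  constructor
  · have := compare_aux hb (fun m => (-1) * F m - 2 * φ m) C hC (fun n hn => by
      rw [topT_sub, hs, topT_mul]
      have h1 := hF n hn
      have h2 := hφ n hn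
      have h3 := abs_le.1 (hG n hn)
      linarith) (fun n hn => by
      have h1 := abs_le.1 (hFC n hn)
      have h2 := hφ0 n hn
      linarith) n hn
    linarith
  · have := compare_aux hb (fun m => F m - 2 * φ m) C hC (fun n hn => by
      rw [topT_sub, hs]
      have h1 := hF n hn
      have h2 := hφ n hn
      have h3 := abs_le.1 (hG n hn)
      linarith) (fun n hn => by
      have h1 := abs_le.1 (hFC n hn)
      have h2 := hφ0 n hn
      linarith) n hn
    linarith

lemma irwin_sub {b : ℕ} (hb : 2 ≤ b) (k : ℕ) :
    irwinSum b 0 k - b * Real.log b = ∑ a ∈ Finset.range (b - 1), VV b k (a + 1) := by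
  rw [irwin_eq hb k]
  unfold VV
  rw [Finset.sum_sub_distrib]
  congr 1
  unfold LL
  rw [← Finset.mul_sum, Finset.sum_range_sub (fun i : ℕ => Real.log ((i + 1 : ℕ) : ℝ))]
  simp [Nat.sub_add_cancel (show 1 ≤ b by omega)]

lemma irwin_identity {b : ℕ} (hb : 2 ≤ b) (hs : Summable fun n : ℕ => VV b 2 (n + 1))
    (hD : Summable fun n : ℕ => VV b 1 (b * (n + 1)) - VV b 2 (b * (n + 1))) :
    irwinSum b 0 2 - b * Real.log b
      = ∑' n : ℕ, (VV b 1 (b * (n + 1)) - VV b 2 (b * (n + 1))) := by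
  rw [irwin_sub hb]
  have hfin : ∀ N : ℕ, ∑ n ∈ Finset.range N, VV b 2 (n + 1)
      = ∑ n ∈ Finset.range N, (VV b 1 (b * (n + 1)) - VV b 2 (b * (n + 1)))
        + (∑ n ∈ Finset.range (b - 1 + N * b), VV b 2 (n + 1)
            - ∑ a ∈ Finset.range (b - 1), VV b 2 (a + 1)) := by
    intro N
    rw [Finset.sum_range_add, add_sub_cancel_left, sum_range_mul_nat, ← Finset.sum_add_distrib]
    apply Finset.sum_congr rfl
    intro n _
    rw [VV_succ hb 1 (show 1 ≤ n + 1 by omega)]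
    obtain ⟨c, rfl⟩ : ∃ c, b = c + 1 := ⟨b - 1, by omega⟩
    rw [Finset.sum_range_succ']
    simp only [topT, Nat.add_sub_cancel]
    have e1 : c + (n * (c + 1) + 0) + 1 = (c + 1) * (n + 1) := by ring
    have e2 : ∀ j, c + (n * (c + 1) + (j + 1)) + 1 = (c + 1) * (n + 1) + (j + 1) := fun j => by ring
    simp only [e1, e2]
    ring
  have h1 := hs.hasSum.tendsto_sum_nat
  have h2 := hD.hasSum.tendsto_sum_nat
  have hmap : Tendsto (fun N : ℕ => b - 1 + N * b) atTop atTop := by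
    apply tendsto_atTop_mono (fun N => ?_) tendsto_id
    have : N * 1 ≤ N * b := Nat.mul_le_mul_left N (by omega)
    simp only [id]; omega
  have h3 := h1.comp hmap
  have h4 := h2.add (h3.sub_const (∑ a ∈ Finset.range (b - 1), VV b 2 (a + 1)))
  have h5 := tendsto_nhds_unique h1 (h4.congr (fun N => (hfin N).symm))
  linarith

/-- Combination of inverse powers. -/
noncomputable def cmb (A B C D : ℝ) (n : ℕ) : ℝ :=
  A * (1 / (n : ℝ) ^ 2) + B * (1 / (n : ℝ) ^ 3) + C * (1 / (n : ℝ) ^ 4) + D * (1 / (n : ℝ) ^ 5)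

lemma topT_cmb (b : ℕ) (A B C D : ℝ) (n : ℕ) :
    topT b (cmb A B C D) n = A * topT b (fun m => 1 / (m : ℝ) ^ 2) n
      + B * topT b (fun m => 1 / (m : ℝ) ^ 3) n + C * topT b (fun m => 1 / (m : ℝ) ^ 4) n
      + D * topT b (fun m => 1 / (m : ℝ) ^ 5) n := by
  unfold cmb
  rw [topT_add, topT_add, topT_add, topT_mul, topT_mul, topT_mul, topT_mul]

lemma cmb_scale {b : ℕ} (A B C D : ℝ) (n : ℕ) :
    cmb A B C D (b * n) = cmb (A * (1 / (b : ℝ)) ^ 2) (B * (1 / (b : ℝ)) ^ 3)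
      (C * (1 / (b : ℝ)) ^ 4) (D * (1 / (b : ℝ)) ^ 5) n := by
  unfold cmb
  push_cast
  simp only [one_div, mul_pow, mul_inv, inv_pow]
  ring

lemma cmb_mono {A B C D A1 B1 C1 D1 : ℝ} (hA : A ≤ A1) (hB : B ≤ B1) (hC : C ≤ C1) (hD : D ≤ D1)
    (n : ℕ) : cmb A B C D n ≤ cmb A1 B1 C1 D1 n := by
  unfold cmb
  gcongr

lemma cmb_abs (A B C D : ℝ) (n : ℕ) : |cmb A B C D n| ≤ cmb |A| |B| |C| |D| n := by
  have h2 : (0 : ℝ) ≤ 1 / (n : ℝ) ^ 2 := by positivity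
  have h3 : (0 : ℝ) ≤ 1 / (n : ℝ) ^ 3 := by positivity
  have h4 : (0 : ℝ) ≤ 1 / (n : ℝ) ^ 4 := by positivity
  have h5 : (0 : ℝ) ≤ 1 / (n : ℝ) ^ 5 := by positivity
  unfold cmb
  rw [abs_le]
  constructor
  · have := mul_le_mul_of_nonneg_right (neg_abs_le A) h2
    have := mul_le_mul_of_nonneg_right (neg_abs_le B) h3
    have := mul_le_mul_of_nonneg_right (neg_abs_le C) h4
    have := mul_le_mul_of_nonneg_right (neg_abs_le D) h5
    linarith
  · gcongr <;> exact le_abs_self _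

lemma cmb_nonneg {A B C D : ℝ} (hA : 0 ≤ A) (hB : 0 ≤ B) (hC : 0 ≤ C) (hD : 0 ≤ D) (n : ℕ) :
    0 ≤ cmb A B C D n := by
  unfold cmb; positivity

lemma cmb_le_one {A B C D : ℝ} (hB : 0 ≤ B) (hC : 0 ≤ C) (hD : 0 ≤ D) {n : ℕ} (hn : 1 ≤ n) :
    cmb A B C D n ≤ (A + B + C + D) * (1 / (n : ℝ) ^ 2) := by
  have hn1 : (1 : ℝ) ≤ n := by exact_mod_cast hn
  have h : ∀ s, 2 ≤ s → 1 / (n : ℝ) ^ s ≤ 1 / (n : ℝ) ^ 2 := by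
    intro s hs
    apply one_div_le_one_div_of_le (by positivity)
    exact pow_le_pow_right₀ hn1 hs
  have := mul_le_mul_of_nonneg_left (h 3 (by norm_num)) hB
  have := mul_le_mul_of_nonneg_left (h 4 (by norm_num)) hC
  have := mul_le_mul_of_nonneg_left (h 5 (by norm_num)) hD
  unfold cmb
  linarith

lemma sq_le_lin {n : ℕ} (hn : 1 ≤ n) : 1 / (n : ℝ) ^ 2 ≤ 1 / (n : ℝ) := by
  have hn1 : (1 : ℝ) ≤ n := by exact_mod_cast hn
  apply one_div_le_one_div_of_le (by positivity)
  nlinarith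

lemma topT_pow_half {b : ℕ} (hb : 2 ≤ b) {s : ℕ} (hs : 2 ≤ s) {n : ℕ} (hn : 1 ≤ n) :
    topT b (fun m => 1 / (m : ℝ) ^ s) n ≤ 1 / 2 * (1 / (n : ℝ) ^ s) := by
  refine (topT_pow_le hb s hn).trans (mul_le_mul_of_nonneg_right ?_ (by positivity))
  have hb2 : (2 : ℝ) ≤ b := by exact_mod_cast hb
  have h : (b : ℝ) ^ 2 ≤ (b : ℝ) ^ s := pow_le_pow_right₀ (by linarith) hs
  rw [div_le_iff₀ (by positivity)]
  nlinarith

lemma topT_cmb_half {b : ℕ} (hb : 2 ≤ b) {A B C D : ℝ} (hA : 0 ≤ A) (hB : 0 ≤ B) (hC : 0 ≤ C)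
    (hD : 0 ≤ D) {n : ℕ} (hn : 1 ≤ n) : topT b (cmb A B C D) n ≤ cmb A B C D n / 2 := by
  rw [topT_cmb]
  have := mul_le_mul_of_nonneg_left (topT_pow_half hb (le_refl 2) hn) hA
  have := mul_le_mul_of_nonneg_left (topT_pow_half hb (show 2 ≤ 3 by norm_num) hn) hB
  have := mul_le_mul_of_nonneg_left (topT_pow_half hb (show 2 ≤ 4 by norm_num) hn) hC
  have := mul_le_mul_of_nonneg_left (topT_pow_half hb (show 2 ≤ 5 by norm_num) hn) hD
  unfold cmb
  linarith

lemma topT_approx {b : ℕ} (hb : 2 ≤ b) (f : ℕ → ℝ) (h : ℕ → ℝ) (M : ℝ) (hM : 0 ≤ M) (n : ℕ)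
    (H : ∀ a, a < b - 1 → |f (b * n + (a + 1)) - h a| ≤ M) :
    |topT b f n - ∑ a ∈ Finset.range (b - 1), h a| ≤ b * M := by
  unfold topT
  rw [← Finset.sum_sub_distrib]
  calc _ ≤ ∑ a ∈ Finset.range (b - 1), |f (b * n + (a + 1)) - h a| := Finset.abs_sum_le_sum_abs _ _
    _ ≤ ∑ a ∈ Finset.range (b - 1), M :=
        Finset.sum_le_sum fun a ha => H a (Finset.mem_range.1 ha)
    _ = ((b - 1 : ℕ) : ℝ) * M := by simp
    _ ≤ b * M := by
        gcongr
        omega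

lemma pt2 {y a : ℝ} (hy : 0 < y) (ha : 0 ≤ a) :
    |1 / (y + a) ^ 2 - (1 / y ^ 2 - 2 * a / y ^ 3 + 3 * a ^ 2 / y ^ 4)| ≤ 4 * a ^ 3 / y ^ 5 := by
  have e : 1 / (y + a) ^ 2 - (1 / y ^ 2 - 2 * a / y ^ 3 + 3 * a ^ 2 / y ^ 4)
      = -((4 * a ^ 3 * y + 3 * a ^ 4) / (y ^ 4 * (y + a) ^ 2)) := by
    field_simp; ring
  rw [e, abs_neg, abs_of_nonneg (by positivity), div_le_div_iff₀ (by positivity) (by positivity)]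
  have : 0 ≤ 4 * a ^ 3 * (y + a) ^ 2 * y ^ 4 - (4 * a ^ 3 * y + 3 * a ^ 4) * y ^ 5 := by
    have : 4 * a ^ 3 * (y + a) ^ 2 * y ^ 4 - (4 * a ^ 3 * y + 3 * a ^ 4) * y ^ 5
      = a ^ 4 * y ^ 5 * 5 + 4 * a ^ 5 * y ^ 4 := by ring
    rw [this]; positivity
  nlinarith

lemma pt3 {y a : ℝ} (hy : 0 < y) (ha : 0 ≤ a) :
    |1 / (y + a) ^ 3 - (1 / y ^ 3 - 3 * a / y ^ 4)| ≤ 6 * a ^ 2 / y ^ 5 := by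
  have e : 1 / (y + a) ^ 3 - (1 / y ^ 3 - 3 * a / y ^ 4)
      = (6 * a ^ 2 * y ^ 2 + 8 * a ^ 3 * y + 3 * a ^ 4) / (y ^ 4 * (y + a) ^ 3) := by
    field_simp; ring
  rw [e, abs_of_nonneg (by positivity), div_le_div_iff₀ (by positivity) (by positivity)]
  have : 0 ≤ 6 * a ^ 2 * (y ^ 4 * (y + a) ^ 3)
      - (6 * a ^ 2 * y ^ 2 + 8 * a ^ 3 * y + 3 * a ^ 4) * y ^ 5 := by
    have : 6 * a ^ 2 * (y ^ 4 * (y + a) ^ 3)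
      - (6 * a ^ 2 * y ^ 2 + 8 * a ^ 3 * y + 3 * a ^ 4) * y ^ 5
      = 10 * a ^ 3 * y ^ 6 + 15 * a ^ 4 * y ^ 5 + 6 * a ^ 5 * y ^ 4 := by ring
    rw [this]; positivity
  linarith

lemma pt4 {y a : ℝ} (hy : 0 < y) (ha : 0 ≤ a) :
    |1 / (y + a) ^ 4 - 1 / y ^ 4| ≤ 4 * a / y ^ 5 := by
  have e : 1 / (y + a) ^ 4 - 1 / y ^ 4
      = -((4 * a * y ^ 3 + 6 * a ^ 2 * y ^ 2 + 4 * a ^ 3 * y + a ^ 4) / (y ^ 4 * (y + a) ^ 4)) := by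
    field_simp; ring
  rw [e, abs_neg, abs_of_nonneg (by positivity), div_le_div_iff₀ (by positivity) (by positivity)]
  have : 0 ≤ 4 * a * (y ^ 4 * (y + a) ^ 4)
      - (4 * a * y ^ 3 + 6 * a ^ 2 * y ^ 2 + 4 * a ^ 3 * y + a ^ 4) * y ^ 5 := by
    have : 4 * a * (y ^ 4 * (y + a) ^ 4)
      - (4 * a * y ^ 3 + 6 * a ^ 2 * y ^ 2 + 4 * a ^ 3 * y + a ^ 4) * y ^ 5
      = 10 * a ^ 2 * y ^ 7 + 20 * a ^ 3 * y ^ 6 + 15 * a ^ 4 * y ^ 5 + 4 * a ^ 5 * y ^ 4 := by ring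
    rw [this]; positivity
  linarith

lemma sum_one (c : ℕ) : ∑ a ∈ Finset.range c, ((a : ℝ) + 1) = (c : ℝ) * (c + 1) / 2 := by
  induction c with
  | zero => simp
  | succ c ih => rw [Finset.sum_range_succ, ih]; push_cast; ring

lemma sum_two (c : ℕ) : ∑ a ∈ Finset.range c, ((a : ℝ) + 1) ^ 2 = (c : ℝ) * (c + 1) * (2 * c + 1) / 6 := by
  induction c with
  | zero => simp
  | succ c ih => rw [Finset.sum_range_succ, ih]; push_cast; ring

lemma topT2 {b : ℕ} (hb : 2 ≤ b) {n : ℕ} (hn : 1 ≤ n) {t : ℝ} (ht : t = 1 / (b : ℝ)) :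
    |topT b (fun m => 1 / (m : ℝ) ^ 2) n - cmb (t - t ^ 2) (-(t - t ^ 2))
      (t * (1 - t) * (2 - t) / 2) 0 n| ≤ 4 * t * (1 / (n : ℝ) ^ 5) := by
  have hb0 : (0 : ℝ) < b := by positivity
  have hn0 : (0 : ℝ) < n := by positivity
  have hy : (0 : ℝ) < b * n := by positivity
  have h := topT_approx hb (fun m => 1 / (m : ℝ) ^ 2)
    (fun a => 1 / ((b : ℝ) * n) ^ 2 - 2 * ((a : ℝ) + 1) / ((b : ℝ) * n) ^ 3
      + 3 * ((a : ℝ) + 1) ^ 2 / ((b : ℝ) * n) ^ 4) (4 * (b : ℝ) ^ 3 / ((b : ℝ) * n) ^ 5)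
    (by positivity) n (fun a ha => by
      have ha2 : (a : ℝ) + 1 ≤ b := by exact_mod_cast (show a + 1 ≤ b by omega)
      have := pt2 hy (show (0 : ℝ) ≤ (a : ℝ) + 1 by positivity)
      push_cast
      refine this.trans ?_
      gcongr)
  have e1 : ∑ a ∈ Finset.range (b - 1), (1 / ((b : ℝ) * n) ^ 2 - 2 * ((a : ℝ) + 1) / ((b : ℝ) * n) ^ 3
      + 3 * ((a : ℝ) + 1) ^ 2 / ((b : ℝ) * n) ^ 4) = cmb (t - t ^ 2) (-(t - t ^ 2))
      (t * (1 - t) * (2 - t) / 2) 0 n := by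
    rw [Finset.sum_add_distrib, Finset.sum_sub_distrib]
    simp only [← Finset.sum_div,
      ← Finset.mul_sum, sum_one, sum_two, Finset.sum_const, Finset.card_range, nsmul_eq_mul]
    rw [Nat.cast_sub (by omega), ht]
    unfold cmb
    push_cast
    field_simp
    ring
  have e2 : (b : ℝ) * (4 * (b : ℝ) ^ 3 / ((b : ℝ) * n) ^ 5) = 4 * t * (1 / (n : ℝ) ^ 5) := by
    rw [ht]; field_simp
  rw [e1, e2] at h
  exact h

lemma topT3 {b : ℕ} (hb : 2 ≤ b) {n : ℕ} (hn : 1 ≤ n) {t : ℝ} (ht : t = 1 / (b : ℝ)) :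
    |topT b (fun m => 1 / (m : ℝ) ^ 3) n - cmb 0 (t ^ 2 - t ^ 3)
      (-(3 / 2 * t ^ 2 * (1 - t))) 0 n| ≤ 6 * t ^ 2 * (1 / (n : ℝ) ^ 5) := by
  have hb0 : (0 : ℝ) < b := by positivity
  have hn0 : (0 : ℝ) < n := by positivity
  have hy : (0 : ℝ) < b * n := by positivity
  have h := topT_approx hb (fun m => 1 / (m : ℝ) ^ 3)
    (fun a => 1 / ((b : ℝ) * n) ^ 3 - 3 * ((a : ℝ) + 1) / ((b : ℝ) * n) ^ 4)
    (6 * (b : ℝ) ^ 2 / ((b : ℝ) * n) ^ 5)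
    (by positivity) n (fun a ha => by
      have ha2 : (a : ℝ) + 1 ≤ b := by exact_mod_cast (show a + 1 ≤ b by omega)
      have := pt3 hy (show (0 : ℝ) ≤ (a : ℝ) + 1 by positivity)
      push_cast
      refine this.trans ?_
      gcongr)
  have e1 : ∑ a ∈ Finset.range (b - 1), (1 / ((b : ℝ) * n) ^ 3 - 3 * ((a : ℝ) + 1) / ((b : ℝ) * n) ^ 4)
      = cmb 0 (t ^ 2 - t ^ 3) (-(3 / 2 * t ^ 2 * (1 - t))) 0 n := by
    simp only [Finset.sum_sub_distrib, ← Finset.sum_div,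
      ← Finset.mul_sum, sum_one, Finset.sum_const, Finset.card_range, nsmul_eq_mul]
    rw [Nat.cast_sub (by omega), ht]
    unfold cmb
    push_cast
    field_simp
    ring
  have e2 : (b : ℝ) * (6 * (b : ℝ) ^ 2 / ((b : ℝ) * n) ^ 5) = 6 * t ^ 2 * (1 / (n : ℝ) ^ 5) := by
    rw [ht]; field_simp
  rw [e1, e2] at h
  exact h

lemma topT4 {b : ℕ} (hb : 2 ≤ b) {n : ℕ} (hn : 1 ≤ n) {t : ℝ} (ht : t = 1 / (b : ℝ)) :
    |topT b (fun m => 1 / (m : ℝ) ^ 4) n - cmb 0 0 (t ^ 3 - t ^ 4) 0 n|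
      ≤ 4 * t ^ 3 * (1 / (n : ℝ) ^ 5) := by
  have hb0 : (0 : ℝ) < b := by positivity
  have hn0 : (0 : ℝ) < n := by positivity
  have hy : (0 : ℝ) < b * n := by positivity
  have h := topT_approx hb (fun m => 1 / (m : ℝ) ^ 4)
    (fun a => 1 / ((b : ℝ) * n) ^ 4)
    (4 * (b : ℝ) / ((b : ℝ) * n) ^ 5)
    (by positivity) n (fun a ha => by
      have ha2 : (a : ℝ) + 1 ≤ b := by exact_mod_cast (show a + 1 ≤ b by omega)
      have := pt4 hy (show (0 : ℝ) ≤ (a : ℝ) + 1 by positivity)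
      push_cast
      refine this.trans ?_
      gcongr)
  have e1 : ∑ a ∈ Finset.range (b - 1), (1 / ((b : ℝ) * n) ^ 4)
      = cmb 0 0 (t ^ 3 - t ^ 4) 0 n := by
    rw [Finset.sum_const, Finset.card_range, nsmul_eq_mul, Nat.cast_sub (by omega), ht]
    unfold cmb
    push_cast
    field_simp
    ring
  have e2 : (b : ℝ) * (4 * (b : ℝ) / ((b : ℝ) * n) ^ 5) = 4 * t ^ 3 * (1 / (n : ℝ) ^ 5) := by
    rw [ht]; field_simp
  rw [e1, e2] at h
  exact h

lemma mul_abs_bound {A x y z : ℝ} (h : |x - y| ≤ z) : |A * x - A * y| ≤ |A| * z := by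
  rw [← mul_sub, abs_mul]
  gcongr

lemma step {b : ℕ} (hb : 2 ≤ b) {t : ℝ} (ht : t = 1 / (b : ℝ)) (V H : ℕ → ℝ)
    (hV : ∀ n, 1 ≤ n → V n = H n + topT b V n) (hVb : ∀ n, 1 ≤ n → |V n| ≤ b / (n : ℝ))
    {h2 h3 h4 e2 e3 e4 e5 : ℝ}
    (hH : ∀ n, 1 ≤ n → |H n - cmb h2 h3 h4 0 n| ≤ cmb e2 e3 e4 e5 n)
    (A B C E2 E3 E4 E5 : ℝ) (hE2 : 0 ≤ E2) (hE3 : 0 ≤ E3) (hE4 : 0 ≤ E4) (hE5 : 0 ≤ E5)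
    (k2 : |h2 + A * (t - t ^ 2) - A| + e2 ≤ E2)
    (k3 : |h3 + (-(A * (t - t ^ 2)) + B * (t ^ 2 - t ^ 3)) - B| + e3 ≤ E3)
    (k4 : |h4 + (A * (t * (1 - t) * (2 - t) / 2) - B * (3 / 2 * t ^ 2 * (1 - t))
      + C * (t ^ 3 - t ^ 4)) - C| + e4 ≤ E4)
    (k5 : 4 * t * |A| + 6 * t ^ 2 * |B| + 4 * t ^ 3 * |C| + e5 ≤ E5) :
    ∀ n, 1 ≤ n → |V n - cmb A B C 0 n| ≤ 2 * cmb E2 E3 E4 E5 n := by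
  apply compare_super hb (fun n => V n - cmb A B C 0 n)
    (fun n => H n + topT b (cmb A B C 0) n - cmb A B C 0 n) (cmb E2 E3 E4 E5)
    (b + (|A| + |B| + |C| + |(0 : ℝ)|)) (by positivity)
  · intro n hn
    rw [topT_sub b V (cmb A B C 0), hV n hn]
    ring
  · intro n hn
    have h1 := hVb n hn
    have h2 := cmb_abs A B C 0 n
    have h3 := cmb_le_one (A := |A|) (abs_nonneg B) (abs_nonneg C) (abs_nonneg 0) hn
    have h4 := mul_le_mul_of_nonneg_left (sq_le_lin hn)
      (show 0 ≤ |A| + |B| + |C| + |(0 : ℝ)| by positivity)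
    have h5 := abs_sub (V n) (cmb A B C 0 n)
    rw [add_div]
    have h6 : (|A| + |B| + |C| + |(0 : ℝ)|) / (n : ℝ) = (|A| + |B| + |C| + |(0 : ℝ)|) * (1 / (n : ℝ)) := by
      ring
    rw [h6]
    exact h5.trans (add_le_add h1 (h2.trans (h3.trans h4)))
  · intro n hn
    exact cmb_nonneg hE2 hE3 hE4 hE5 n
  · intro n hn
    exact topT_cmb_half hb hE2 hE3 hE4 hE5 hn
  · intro n hn
    have p1 := hH n hn
    have p2 := mul_abs_bound (A := A) (topT2 hb hn ht)
    have p3 := mul_abs_bound (A := B) (topT3 hb hn ht)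
    have p4 := mul_abs_bound (A := C) (topT4 hb hn ht)
    have p5 := cmb_abs (h2 + A * (t - t ^ 2) - A)
      (h3 + (-(A * (t - t ^ 2)) + B * (t ^ 2 - t ^ 3)) - B)
      (h4 + (A * (t * (1 - t) * (2 - t) / 2) - B * (3 / 2 * t ^ 2 * (1 - t))
      + C * (t ^ 3 - t ^ 4)) - C) 0 n
    have p6 := cmb_mono k2 k3 k4 k5 n
    have e : H n + topT b (cmb A B C 0) n - cmb A B C 0 n
      = (H n - cmb h2 h3 h4 0 n)
        + (A * topT b (fun m => 1 / (m : ℝ) ^ 2) n - A * cmb (t - t ^ 2) (-(t - t ^ 2))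
      (t * (1 - t) * (2 - t) / 2) 0 n)
        + (B * topT b (fun m => 1 / (m : ℝ) ^ 3) n - B * cmb 0 (t ^ 2 - t ^ 3)
      (-(3 / 2 * t ^ 2 * (1 - t))) 0 n)
        + (C * topT b (fun m => 1 / (m : ℝ) ^ 4) n - C * cmb 0 0 (t ^ 3 - t ^ 4) 0 n)
        + cmb (h2 + A * (t - t ^ 2) - A)
      (h3 + (-(A * (t - t ^ 2)) + B * (t ^ 2 - t ^ 3)) - B)
      (h4 + (A * (t * (1 - t) * (2 - t) / 2) - B * (3 / 2 * t ^ 2 * (1 - t))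
      + C * (t ^ 3 - t ^ 4)) - C) 0 n := by
      rw [topT_cmb]; unfold cmb; ring
    rw [e]
    refine (abs_add_le _ _).trans ?_
    refine (add_le_add ((abs_add_le _ _).trans (add_le_add ((abs_add_le _ _).trans
      (add_le_add ((abs_add_le _ _).trans (add_le_add p1 p2)) p3)) p4)) p5).trans (le_trans (le_of_eq ?_) p6)
    unfold cmb
    rw [abs_zero]
    ring

lemma g_approx {b : ℕ} (hb : 2 ≤ b) {t : ℝ} (ht : t = 1 / (b : ℝ)) (n : ℕ) (hn : 1 ≤ n) :
    |(1 / (n : ℝ) - LL b (b * n)) - cmb (t / 2) (-(t ^ 2 / 3)) 0 0 n|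
      ≤ cmb 0 0 (2 * t ^ 3) 0 n := by
  have hb0 : (0 : ℝ) < b := by positivity
  have hb2 : (2 : ℝ) ≤ b := by exact_mod_cast hb
  have hn0 : (0 : ℝ) < n := by positivity
  have hn1 : (1 : ℝ) ≤ n := by exact_mod_cast hn
  rw [LL_eq b (Nat.mul_pos (by omega) hn)]
  set z : ℝ := 1 / ((b * n : ℕ) : ℝ) with hz
  have hz0 : 0 < z := by rw [hz]; push_cast; positivity
  have hz1 : z ≤ 1 / 2 := by
    rw [hz]; push_cast
    apply one_div_le_one_div_of_le (by norm_num)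
    nlinarith
  have hlog := Real.abs_log_sub_add_sum_range_le (x := -z) (by rw [abs_neg, abs_of_pos hz0]; linarith) 3
  rw [abs_neg, abs_of_pos hz0] at hlog
  simp only [Finset.sum_range_succ, Finset.sum_range_zero, sub_neg_eq_add] at hlog
  have hq : z ^ (3 + 1) / (1 - z) ≤ 2 * z ^ 4 := by
    rw [div_le_iff₀ (by linarith)]
    have h0 : 0 ≤ z ^ 4 * (1 - 2 * z) := mul_nonneg (by positivity) (by linarith)
    have h1 : 2 * z ^ 4 * (1 - z) = z ^ (3 + 1) + z ^ 4 * (1 - 2 * z) := by ring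
    linarith
  have hl := hlog.trans hq
  have e : (1 / (n : ℝ) - b * Real.log (1 + z)) - cmb (t / 2) (-(t ^ 2 / 3)) 0 0 n
      = -(b * (-z + (-z) ^ 2 / 2 + (-z) ^ 3 / 3 + Real.log (1 + z))) := by
    rw [hz, ht]; unfold cmb; push_cast; field_simp; ring
  have e2 : cmb 0 0 (2 * t ^ 3) 0 n = b * (2 * z ^ 4) := by
    rw [hz, ht]; unfold cmb; push_cast; field_simp; ring
  rw [e, e2, abs_neg, abs_mul, abs_of_pos hb0]
  gcongr
  refine le_trans (le_of_eq ?_) hl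
  congr 1
  norm_num

lemma pow_facts {t : ℝ} (h0 : 0 ≤ t) (h1 : t ≤ 1) : ∀ i j : ℕ, i ≤ j → t ^ j ≤ t ^ i :=
  fun _ _ h => pow_le_pow_of_le_one h0 h1 h

lemma V0_approx {b : ℕ} (hb : 2 ≤ b) {t : ℝ} (ht : t = 1 / (b : ℝ)) (t0 : 0 ≤ t) (t1 : t ≤ 1) :
    ∀ n, 1 ≤ n → |VV b 0 n - cmb (t / 2 + t ^ 2 / 2 - t ^ 4 / 2) (-(5 / 6 * t ^ 2)) 0 0 n|
      ≤ 2 * cmb (20 * t ^ 5) (20 * t ^ 3) (20 * t ^ 2) (20 * t ^ 2) n := by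
  have P := pow_facts t0 t1
  have N : ∀ i : ℕ, 0 ≤ t ^ i := fun i => pow_nonneg t0 i
  have hA : |t / 2 + t ^ 2 / 2 - t ^ 4 / 2| ≤ 2 * t := by
    rw [abs_le]; constructor <;> linarith [P 1 2 (by norm_num), P 1 4 (by norm_num), N 2, N 4, pow_one t]
  have hB : |(-(5 / 6 * t ^ 2))| ≤ 1 * t ^ 2 := by
    rw [abs_le]; constructor <;> linarith [N 2]
  apply step hb ht (VV b 0) (fun n => 1 / (n : ℝ) - LL b (b * n)) (fun n hn => VV_zero hb hn)
    (fun n hn => VV_abs hb 0 hn) (fun n hn => g_approx hb ht n hn)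
  · positivity
  · positivity
  · positivity
  · positivity
  · rw [← le_sub_iff_add_le, abs_le]
    constructor <;> linarith [P 5 6 (by norm_num), N 5, N 6]
  · rw [← le_sub_iff_add_le, abs_le]
    constructor <;>
      linarith [P 3 4 (by norm_num), P 3 5 (by norm_num), P 3 6 (by norm_num), N 3, N 4, N 5, N 6]
  · rw [← le_sub_iff_add_le, abs_le]
    constructor <;>
      linarith [P 2 3 (by norm_num), P 2 4 (by norm_num), P 2 5 (by norm_num), P 2 6 (by norm_num),
        P 2 7 (by norm_num), N 2, N 3, N 4, N 5, N 6, N 7]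
  · have a1 := mul_le_mul_of_nonneg_left hA (show 0 ≤ 4 * t by positivity)
    have a2 := mul_le_mul_of_nonneg_left hB (show 0 ≤ 6 * t ^ 2 by positivity)
    rw [abs_zero]
    linarith [P 2 4 (by norm_num), N 2, N 4]

lemma V1_approx {b : ℕ} (hb : 2 ≤ b) {t : ℝ} (ht : t = 1 / (b : ℝ)) (t0 : 0 ≤ t) (t1 : t ≤ 1) :
    ∀ n, 1 ≤ n → |VV b 1 n - cmb (t ^ 3 / 2 + t ^ 4 + t ^ 5 / 2 - t ^ 6)
        (-(t ^ 4 / 2 + 4 / 3 * t ^ 5)) (t ^ 4 / 2) 0 n|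
      ≤ 2 * cmb (100 * t ^ 7) (100 * t ^ 6) (100 * t ^ 5) (100 * t ^ 4) n := by
  have P := pow_facts t0 t1
  have N : ∀ i : ℕ, 0 ≤ t ^ i := fun i => pow_nonneg t0 i
  have hA : |t ^ 3 / 2 + t ^ 4 + t ^ 5 / 2 - t ^ 6| ≤ 3 * t ^ 3 := by
    rw [abs_le]; constructor <;> linarith [P 3 4 (by norm_num), P 3 5 (by norm_num),
      P 3 6 (by norm_num), N 3, N 4, N 5, N 6]
  have hB : |(-(t ^ 4 / 2 + 4 / 3 * t ^ 5))| ≤ 2 * t ^ 4 := by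
    rw [abs_le]; constructor <;> linarith [P 4 5 (by norm_num), N 4, N 5]
  have hC : |t ^ 4 / 2| ≤ 1 * t ^ 4 := by
    rw [abs_le]; constructor <;> linarith [N 4]
  have hH : ∀ n, 1 ≤ n → |VV b 0 (b * n)
      - cmb ((t / 2 + t ^ 2 / 2 - t ^ 4 / 2) * t ^ 2) (-(5 / 6 * t ^ 2) * t ^ 3) 0 0 n|
      ≤ cmb (40 * t ^ 7) (40 * t ^ 6) (40 * t ^ 6) (40 * t ^ 7) n := by
    intro n hn
    have h := V0_approx hb ht t0 t1 (b * n) (Nat.mul_pos (by omega) hn)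
    rw [cmb_scale, cmb_scale, ← ht, zero_mul, zero_mul] at h
    refine h.trans (le_of_eq ?_)
    unfold cmb; ring
  apply step hb ht (VV b 1) (fun n => VV b 0 (b * n)) (fun n hn => VV_succ hb 0 hn)
    (fun n hn => VV_abs hb 1 hn) hH
  · positivity
  · positivity
  · positivity
  · positivity
  · rw [← le_sub_iff_add_le, abs_le]
    constructor <;> linarith [P 7 8 (by norm_num), N 7, N 8]
  · rw [← le_sub_iff_add_le, abs_le]
    constructor <;>
      linarith [P 6 7 (by norm_num), P 6 8 (by norm_num), N 6, N 7, N 8]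
  · rw [← le_sub_iff_add_le, abs_le]
    constructor <;>
      linarith [P 5 6 (by norm_num), P 5 7 (by norm_num), P 5 8 (by norm_num), P 5 9 (by norm_num),
        N 5, N 6, N 7, N 8, N 9]
  · have a1 := mul_le_mul_of_nonneg_left hA (show 0 ≤ 4 * t by positivity)
    have a2 := mul_le_mul_of_nonneg_left hB (show 0 ≤ 6 * t ^ 2 by positivity)
    have a3 := mul_le_mul_of_nonneg_left hC (show 0 ≤ 4 * t ^ 3 by positivity)
    linarith [P 4 6 (by norm_num), P 4 7 (by norm_num), N 4, N 6, N 7]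

lemma V2_approx {b : ℕ} (hb : 2 ≤ b) {t : ℝ} (ht : t = 1 / (b : ℝ)) (t0 : 0 ≤ t) (t1 : t ≤ 1) :
    ∀ n, 1 ≤ n → |VV b 2 n - cmb (t ^ 5 / 2 + 3 / 2 * t ^ 6) 0 0 0 n|
      ≤ 2 * cmb (300 * t ^ 7) (300 * t ^ 6) (300 * t ^ 6) (300 * t ^ 6) n := by
  have P := pow_facts t0 t1
  have N : ∀ i : ℕ, 0 ≤ t ^ i := fun i => pow_nonneg t0 i
  have hA : |t ^ 5 / 2 + 3 / 2 * t ^ 6| ≤ 2 * t ^ 5 := by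
    rw [abs_le]; constructor <;> linarith [P 5 6 (by norm_num), N 5, N 6]
  have hH : ∀ n, 1 ≤ n → |VV b 1 (b * n)
      - cmb ((t ^ 3 / 2 + t ^ 4 + t ^ 5 / 2 - t ^ 6) * t ^ 2)
        (-(t ^ 4 / 2 + 4 / 3 * t ^ 5) * t ^ 3) (t ^ 4 / 2 * t ^ 4) 0 n|
      ≤ cmb (200 * t ^ 9) (200 * t ^ 9) (200 * t ^ 9) (200 * t ^ 9) n := by
    intro n hn
    have h := V1_approx hb ht t0 t1 (b * n) (Nat.mul_pos (by omega) hn)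
    rw [cmb_scale, cmb_scale, ← ht, zero_mul] at h
    refine h.trans (le_of_eq ?_)
    unfold cmb; ring
  apply step hb ht (VV b 2) (fun n => VV b 1 (b * n)) (fun n hn => VV_succ hb 1 hn)
    (fun n hn => VV_abs hb 2 hn) hH
  · positivity
  · positivity
  · positivity
  · positivity
  · rw [← le_sub_iff_add_le, abs_le]
    constructor <;> linarith [P 7 8 (by norm_num), P 7 9 (by norm_num), N 7, N 8, N 9]
  · rw [← le_sub_iff_add_le, abs_le]
    constructor <;>
      linarith [P 6 7 (by norm_num), P 6 8 (by norm_num), P 6 9 (by norm_num), N 6, N 7, N 8, N 9]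
  · rw [← le_sub_iff_add_le, abs_le]
    constructor <;>
      linarith [P 6 7 (by norm_num), P 6 8 (by norm_num), P 6 9 (by norm_num), N 6, N 7, N 8, N 9]
  · have a1 := mul_le_mul_of_nonneg_left hA (show 0 ≤ 4 * t by positivity)
    rw [abs_zero]
    linarith [P 6 9 (by norm_num), N 6, N 9]

lemma D_approx {b : ℕ} (hb : 2 ≤ b) {t : ℝ} (ht : t = 1 / (b : ℝ)) (t0 : 0 ≤ t) (t1 : t ≤ 1) :
    ∀ n, 1 ≤ n → |(VV b 1 (b * n) - VV b 2 (b * n))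
      - cmb ((t ^ 3 / 2 + t ^ 4 - 5 / 2 * t ^ 6) * t ^ 2)
        (-(t ^ 4 / 2 + 4 / 3 * t ^ 5) * t ^ 3) (t ^ 4 / 2 * t ^ 4) 0 n|
      ≤ 4000 * t ^ 9 * (1 / (n : ℝ) ^ 2) := by
  have P := pow_facts t0 t1
  have N : ∀ i : ℕ, 0 ≤ t ^ i := fun i => pow_nonneg t0 i
  intro n hn
  have h1 := V1_approx hb ht t0 t1 (b * n) (Nat.mul_pos (by omega) hn)
  have h2 := V2_approx hb ht t0 t1 (b * n) (Nat.mul_pos (by omega) hn)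
  rw [cmb_scale, cmb_scale, ← ht] at h1 h2
  have e : (VV b 1 (b * n) - VV b 2 (b * n))
      - cmb ((t ^ 3 / 2 + t ^ 4 - 5 / 2 * t ^ 6) * t ^ 2)
        (-(t ^ 4 / 2 + 4 / 3 * t ^ 5) * t ^ 3) (t ^ 4 / 2 * t ^ 4) 0 n
      = (VV b 1 (b * n) - cmb ((t ^ 3 / 2 + t ^ 4 + t ^ 5 / 2 - t ^ 6) * t ^ 2)
        (-(t ^ 4 / 2 + 4 / 3 * t ^ 5) * t ^ 3) (t ^ 4 / 2 * t ^ 4) (0 * t ^ 5) n)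
        - (VV b 2 (b * n) - cmb ((t ^ 5 / 2 + 3 / 2 * t ^ 6) * t ^ 2) (0 * t ^ 3) (0 * t ^ 4)
          (0 * t ^ 5) n) := by
    unfold cmb; ring
  rw [e]
  refine (abs_sub _ _).trans ((add_le_add h1 h2).trans ?_)
  have h3 := cmb_le_one (A := 100 * t ^ 7 * t ^ 2) (B := 100 * t ^ 6 * t ^ 3)
    (C := 100 * t ^ 5 * t ^ 4) (D := 100 * t ^ 4 * t ^ 5) (by positivity) (by positivity)
    (by positivity) hn
  have h4 := cmb_le_one (A := 300 * t ^ 7 * t ^ 2) (B := 300 * t ^ 6 * t ^ 3)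
    (C := 300 * t ^ 6 * t ^ 4) (D := 300 * t ^ 6 * t ^ 5) (by positivity) (by positivity)
    (by positivity) hn
  have h5 : (300 * t ^ 7 * t ^ 2 + 300 * t ^ 6 * t ^ 3 + 300 * t ^ 6 * t ^ 4 + 300 * t ^ 6 * t ^ 5)
      ≤ 1200 * t ^ 9 := by
    linarith [P 9 10 (by norm_num), P 9 11 (by norm_num)]
  have h6 := mul_le_mul_of_nonneg_right h5 (show (0 : ℝ) ≤ 1 / (n : ℝ) ^ 2 by positivity)
  have h7 : 0 ≤ t ^ 9 * (1 / (n : ℝ) ^ 2) := mul_nonneg (N 9) (by positivity)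
  have h8 : (100 * t ^ 7 * t ^ 2 + 100 * t ^ 6 * t ^ 3 + 100 * t ^ 5 * t ^ 4 + 100 * t ^ 4 * t ^ 5)
      * (1 / (n : ℝ) ^ 2) = 400 * (t ^ 9 * (1 / (n : ℝ) ^ 2)) := by ring
  rw [h8] at h3
  linarith

lemma zeta_hasSum {s : ℕ} (hs : 2 ≤ s) :
    HasSum (fun n : ℕ => 1 / (((n + 1 : ℕ) : ℝ)) ^ s) (zetaR s) := by
  have h : Summable (fun n : ℕ => 1 / (((n + 1 : ℕ) : ℝ)) ^ s) :=
    (summable_nat_add_iff 1).2 (Real.summable_one_div_nat_pow.2 (by omega))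
  have := h.hasSum
  unfold zetaR
  push_cast at this ⊢
  exact this

lemma cmb_hasSum (A B C : ℝ) :
    HasSum (fun n : ℕ => cmb A B C 0 (n + 1)) (A * zetaR 2 + B * zetaR 3 + C * zetaR 4) := by
  have h := (((zeta_hasSum (le_refl 2)).mul_left A).add
    ((zeta_hasSum (show 2 ≤ 3 by norm_num)).mul_left B)).add
    ((zeta_hasSum (show 2 ≤ 4 by norm_num)).mul_left C)
  have e : (fun n : ℕ => cmb A B C 0 (n + 1)) = fun n : ℕ =>
      A * (1 / (((n + 1 : ℕ) : ℝ)) ^ 2) + B * (1 / (((n + 1 : ℕ) : ℝ)) ^ 3)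
        + C * (1 / (((n + 1 : ℕ) : ℝ)) ^ 4) := by
    funext n; unfold cmb; ring
  rw [e]
  exact h

lemma main_bound {b : ℕ} (hb : 2 ≤ b) {t : ℝ} (ht : t = 1 / (b : ℝ)) (t0 : 0 ≤ t) (t1 : t ≤ 1) :
    |(irwinSum b 0 2 - b * Real.log b) - ((t ^ 3 / 2 + t ^ 4 - 5 / 2 * t ^ 6) * t ^ 2 * zetaR 2
        + -(t ^ 4 / 2 + 4 / 3 * t ^ 5) * t ^ 3 * zetaR 3 + t ^ 4 / 2 * t ^ 4 * zetaR 4)|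
      ≤ 4000 * t ^ 9 * zetaR 2 := by
  have z2 := zeta_hasSum (le_refl 2)
  have hV2 : Summable fun n : ℕ => VV b 2 (n + 1) := by
    apply Summable.of_norm_bounded (z2.summable.mul_left
      (|t ^ 5 / 2 + 3 / 2 * t ^ 6| + |(0 : ℝ)| + |(0 : ℝ)| + |(0 : ℝ)|
        + 2 * (300 * t ^ 7 + 300 * t ^ 6 + 300 * t ^ 6 + 300 * t ^ 6)))
    intro n
    have hn : 1 ≤ n + 1 := by omega
    have h1 := V2_approx hb ht t0 t1 (n + 1) hn
    have h2 := cmb_le_one (A := 300 * t ^ 7) (B := 300 * t ^ 6) (C := 300 * t ^ 6)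
      (D := 300 * t ^ 6) (by positivity) (by positivity) (by positivity) hn
    have h3 := cmb_abs (t ^ 5 / 2 + 3 / 2 * t ^ 6) 0 0 0 (n + 1)
    have h4 := cmb_le_one (A := |t ^ 5 / 2 + 3 / 2 * t ^ 6|) (abs_nonneg 0) (abs_nonneg 0)
      (abs_nonneg 0) hn
    have h5 := abs_add_le (VV b 2 (n + 1) - cmb (t ^ 5 / 2 + 3 / 2 * t ^ 6) 0 0 0 (n + 1))
      (cmb (t ^ 5 / 2 + 3 / 2 * t ^ 6) 0 0 0 (n + 1))
    rw [sub_add_cancel] at h5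
    rw [Real.norm_eq_abs, add_mul, mul_assoc 2]
    linarith
  have hc := cmb_hasSum ((t ^ 3 / 2 + t ^ 4 - 5 / 2 * t ^ 6) * t ^ 2)
        (-(t ^ 4 / 2 + 4 / 3 * t ^ 5) * t ^ 3) (t ^ 4 / 2 * t ^ 4)
  have hdiff : ∀ n : ℕ, ‖(VV b 1 (b * (n + 1)) - VV b 2 (b * (n + 1)))
      - cmb ((t ^ 3 / 2 + t ^ 4 - 5 / 2 * t ^ 6) * t ^ 2)
        (-(t ^ 4 / 2 + 4 / 3 * t ^ 5) * t ^ 3) (t ^ 4 / 2 * t ^ 4) 0 (n + 1)‖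
      ≤ 4000 * t ^ 9 * (1 / ((n + 1 : ℕ) : ℝ) ^ 2) := fun n =>
    D_approx hb ht t0 t1 (n + 1) (by omega)
  have hz := z2.mul_left (4000 * t ^ 9)
  have hsd := Summable.of_norm_bounded hz.summable hdiff
  have hD : Summable fun n : ℕ => VV b 1 (b * (n + 1)) - VV b 2 (b * (n + 1)) := by
    have := hsd.add hc.summable
    simpa using this
  rw [irwin_identity hb hV2 hD, ← hc.tsum_eq, ← hD.tsum_sub hc.summable, ← Real.norm_eq_abs]
  exact tsum_of_norm_bounded hz hdiff

theorem irwin_zero_two_asymptotic :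
    (fun b : ℕ => irwinSum b 0 2 -
      ((b : ℝ) * Real.log b + zetaR 2 / (2 * (b : ℝ) ^ 5) + zetaR 2 / (b : ℝ) ^ 6
        - zetaR 3 / (2 * (b : ℝ) ^ 7)
        - (15 * zetaR 2 + 8 * zetaR 3 - 3 * zetaR 4) / (6 * (b : ℝ) ^ 8)))
      =O[atTop] fun b : ℕ => ((b : ℝ) ^ 9)⁻¹ := by
  apply IsBigO.of_bound (4000 * zetaR 2)
  filter_upwards [eventually_ge_atTop 2] with b hb
  have hb2 : (2 : ℝ) ≤ b := by exact_mod_cast hb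
  have hb0 : (0 : ℝ) < b := by linarith
  have h := main_bound hb (t := 1 / (b : ℝ)) rfl (by positivity)
    (by rw [div_le_one hb0]; linarith)
  rw [Real.norm_eq_abs, Real.norm_eq_abs, abs_of_pos (show 0 < ((b : ℝ) ^ 9)⁻¹ by positivity)]
  refine le_trans (le_of_eq ?_) (h.trans (le_of_eq ?_))
  · congr 1
    field_simp
    ring
  · rw [one_div, inv_pow]; ring
end

section
/- For every fixed integer k ≥ 3, as the integer b → ∞, I(b,0,k) = b·log b + ζ(2)/(2b^{2k+1}) + kζ(2)/(2b^{2k+2}) + ((k² − k − 2)ζ(2) − 2ζ(3))/(4b^{2k+3}) + ((k³ − 3k² − 10k − 6)ζ(2) − 6kζ(3) + 6ζ(4))/(12b^{2k+4}) + O(b^{−2k−5}), the implied constant depending on k. -/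
open Filter Asymptotics

namespace Irwin

open Set

/-- Weighted sum over digit words of length `n` with exactly `k` zeros. -/
noncomputable def W (b : ℕ) : ℕ → ℤ → (ℝ → ℝ) → ℝ
  | 0, k, f => if k = 0 then f 0 else 0
  | n + 1, k, f =>
    (∑ c ∈ Finset.Ico 1 b, W b n k (fun y => f ((c + y) / b))
      + W b n (k - 1) (fun y => f (y / b))) / b

/-- boundedness on the unit interval -/
def Bd (f : ℝ → ℝ) : Prop := ∃ M, ∀ x ∈ Icc (0:ℝ) 1, |f x| ≤ M

/-- the functional `L_k` -/
noncomputable def L (b : ℕ) (k : ℤ) (f : ℝ → ℝ) : ℝ := ∑' n, W b n k f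

lemma mem_step {b c : ℕ} (hc : c < b) {y : ℝ} (hy : y ∈ Icc (0:ℝ) 1) :
    ((c:ℝ) + y) / b ∈ Icc (0:ℝ) 1 := by
  obtain ⟨h0, h1⟩ := hy
  have hb : (0:ℝ) < b := by exact_mod_cast (by omega : 0 < b)
  have hc' : (c:ℝ) + 1 ≤ b := by exact_mod_cast hc
  constructor
  · positivity
  · rw [div_le_one hb]; linarith

lemma mem_step0 {b : ℕ} (hb : 2 ≤ b) {y : ℝ} (hy : y ∈ Icc (0:ℝ) 1) :
    y / b ∈ Icc (0:ℝ) 1 := by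
  have := mem_step (b := b) (c := 0) (by omega) hy
  simpa using this

lemma W_add (b n : ℕ) (k : ℤ) (f g : ℝ → ℝ) :
    W b n k (fun y => f y + g y) = W b n k f + W b n k g := by
  induction n generalizing k f g with
  | zero => simp only [W]; split_ifs <;> simp
  | succ n ih =>
    simp only [W]
    rw [ih (k - 1) (fun y => f (y / b)) (fun y => g (y / b))]
    rw [Finset.sum_congr rfl fun (c : ℕ) _ =>
      ih k (fun y => f ((c + y) / b)) (fun y => g ((c + y) / b))]
    rw [Finset.sum_add_distrib]
    ring

lemma W_smul (b n : ℕ) (k : ℤ) (a : ℝ) (f : ℝ → ℝ) :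
    W b n k (fun y => a * f y) = a * W b n k f := by
  induction n generalizing k f with
  | zero => simp only [W]; split_ifs <;> simp
  | succ n ih =>
    simp only [W]
    rw [ih (k - 1) (fun y => f (y / b))]
    rw [Finset.sum_congr rfl fun (c : ℕ) _ => ih k (fun y => f ((c + y) / b))]
    rw [← Finset.mul_sum]
    ring

lemma W_abs {b : ℕ} (hb : 2 ≤ b) (n : ℕ) (k : ℤ) (f : ℝ → ℝ) (M : ℝ)
    (hf : ∀ x ∈ Icc (0:ℝ) 1, |f x| ≤ M) :
    |W b n k f| ≤ M * W b n k (fun _ => 1) := by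
  induction n generalizing k f with
  | zero =>
    simp only [W]; split_ifs
    · simpa using hf 0 (by simp)
    · simp
  | succ n ih =>
    simp only [W]
    rw [abs_div, Nat.abs_cast, ← mul_div_assoc, mul_add, Finset.mul_sum]
    gcongr
    refine (abs_add_le _ _).trans (add_le_add ((Finset.abs_sum_le_sum_abs _ _).trans ?_) ?_)
    · refine Finset.sum_le_sum fun c hc => ih k _ fun x hx => hf _ (mem_step ?_ hx)
      exact (Finset.mem_Ico.1 hc).2
    · exact ih _ _ fun x hx => hf _ (mem_step0 hb hx)

lemma W_congr {b : ℕ} (hb : 2 ≤ b) (n : ℕ) (k : ℤ) (f g : ℝ → ℝ)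
    (h : ∀ x ∈ Icc (0:ℝ) 1, f x = g x) : W b n k f = W b n k g := by
  have h1 := W_abs hb n k (fun y => f y + (-1) * g y) 0 (fun x hx => by simp [h x hx])
  rw [W_add b n k f (fun y => (-1) * g y), W_smul, zero_mul, abs_nonpos_iff] at h1
  linarith

lemma W_one_nonneg {b : ℕ} (hb : 2 ≤ b) (n : ℕ) (k : ℤ) : 0 ≤ W b n k (fun _ => 1) := by
  have := W_abs hb n k (fun _ => 1) 1 (by simp)
  rw [one_mul] at this
  exact (abs_nonneg _).trans this

lemma W_neg (b n : ℕ) (k : ℤ) (hk : k < 0) (f : ℝ → ℝ) : W b n k f = 0 := by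
  induction n generalizing k f with
  | zero => simp only [W]; rw [if_neg (by omega)]
  | succ n ih =>
    simp only [W]
    rw [ih (k - 1) (by omega), Finset.sum_eq_zero fun c _ => ih k hk _]
    simp

lemma W_one_sum {b : ℕ} (hb : 2 ≤ b) (N : ℕ) (k : ℤ) :
    ∑ n ∈ Finset.range N, W b n k (fun _ => 1) ≤ b := by
  induction N generalizing k with
  | zero => simp
  | succ N ih =>
    have hb0 : (0:ℝ) < b := by exact_mod_cast (by omega : 0 < b)
    rw [Finset.sum_range_succ']
    simp only [W, Finset.sum_const, Nat.card_Ico, nsmul_eq_mul]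
    rw [← Finset.sum_div, Finset.sum_add_distrib, ← Finset.mul_sum, Nat.cast_sub (by omega)]
    rcases lt_trichotomy k 0 with h | h | h
    · rw [if_neg (by omega), Finset.sum_eq_zero fun n _ => W_neg b n k h _,
        Finset.sum_eq_zero fun n _ => W_neg b n (k-1) (by omega) _]
      simp
    · rw [if_pos h, Finset.sum_eq_zero fun n _ => W_neg b n (k-1) (by omega) _]
      have := ih k
      have h2 : (1:ℝ) ≤ b := by exact_mod_cast (by omega : 1 ≤ b)
      push_cast
      rw [← le_sub_iff_add_le, div_le_iff₀ hb0]
      nlinarith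
    · rw [if_neg (by omega)]
      have := ih k
      have := ih (k-1)
      have h2 : (1:ℝ) ≤ b := by exact_mod_cast (by omega : 1 ≤ b)
      push_cast
      rw [add_zero, div_le_iff₀ hb0]
      nlinarith

lemma W_one_summable {b : ℕ} (hb : 2 ≤ b) (k : ℤ) : Summable fun n => W b n k (fun _ => 1) :=
  summable_of_sum_range_le (fun n => W_one_nonneg hb n k) (fun N => W_one_sum hb N k)

lemma L_one_le {b : ℕ} (hb : 2 ≤ b) (k : ℤ) : L b k (fun _ => 1) ≤ b :=
  Real.tsum_le_of_sum_range_le (fun n => W_one_nonneg hb n k) (fun N => W_one_sum hb N k)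

lemma W_summable {b : ℕ} (hb : 2 ≤ b) (k : ℤ) {f : ℝ → ℝ} (hf : Bd f) :
    Summable fun n => W b n k f := by
  obtain ⟨M, hM⟩ := hf
  refine Summable.of_norm_bounded ((W_one_summable hb k).mul_left M) fun n => ?_
  exact W_abs hb n k f M hM

lemma L_add {b : ℕ} (hb : 2 ≤ b) (k : ℤ) {f g : ℝ → ℝ} (hf : Bd f) (hg : Bd g) :
    L b k (fun y => f y + g y) = L b k f + L b k g := by
  unfold L
  rw [← (W_summable hb k hf).tsum_add (W_summable hb k hg)]
  exact tsum_congr fun n => W_add b n k f g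

lemma L_smul (b : ℕ) (k : ℤ) (a : ℝ) (f : ℝ → ℝ) :
    L b k (fun y => a * f y) = a * L b k f := by
  unfold L
  rw [← tsum_mul_left]
  exact tsum_congr fun n => W_smul b n k a f

lemma L_congr {b : ℕ} (hb : 2 ≤ b) (k : ℤ) {f g : ℝ → ℝ}
    (h : ∀ x ∈ Icc (0:ℝ) 1, f x = g x) : L b k f = L b k g :=
  tsum_congr fun n => W_congr hb n k f g h

lemma L_abs {b : ℕ} (hb : 2 ≤ b) (k : ℤ) {f : ℝ → ℝ} {M : ℝ}
    (hM : ∀ x ∈ Icc (0:ℝ) 1, |f x| ≤ M) : |L b k f| ≤ M * b := by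
  have hM0 : 0 ≤ M := (abs_nonneg _).trans (hM 0 (by simp))
  have h1 : |L b k f| ≤ M * L b k (fun _ => 1) := by
    unfold L
    rw [← tsum_mul_left, ← Real.norm_eq_abs]
    exact tsum_of_norm_bounded ((W_one_summable hb k).mul_left M).hasSum
      fun n => W_abs hb n k f M hM
  exact h1.trans (mul_le_mul_of_nonneg_left (L_one_le hb k) hM0)

lemma L_neg (b : ℕ) (k : ℤ) (hk : k < 0) (f : ℝ → ℝ) : L b k f = 0 := by
  unfold L
  simp [W_neg b _ k hk f]

lemma Bd.add {f g : ℝ → ℝ} (hf : Bd f) (hg : Bd g) : Bd (fun y => f y + g y) := by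
  obtain ⟨M, hM⟩ := hf
  obtain ⟨N, hN⟩ := hg
  exact ⟨M + N, fun x hx => (abs_add_le _ _).trans (add_le_add (hM x hx) (hN x hx))⟩

lemma Bd.smul {f : ℝ → ℝ} (hf : Bd f) (a : ℝ) : Bd (fun y => a * f y) := by
  obtain ⟨M, hM⟩ := hf
  refine ⟨|a| * M, fun x hx => ?_⟩
  rw [abs_mul]
  exact mul_le_mul_of_nonneg_left (hM x hx) (abs_nonneg _)

lemma Bd.const (a : ℝ) : Bd (fun _ => a) := ⟨|a|, fun _ _ => le_rfl⟩

lemma Bd.step {f : ℝ → ℝ} (hf : Bd f) {b c : ℕ} (hc : c < b) :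
    Bd (fun y => f ((c + y) / b)) := by
  obtain ⟨M, hM⟩ := hf
  exact ⟨M, fun x hx => hM _ (mem_step hc hx)⟩

lemma Bd.step0 {f : ℝ → ℝ} (hf : Bd f) {b : ℕ} (hb : 2 ≤ b) : Bd (fun y => f (y / b)) := by
  obtain ⟨M, hM⟩ := hf
  exact ⟨M, fun x hx => hM _ (mem_step0 hb hx)⟩

lemma Bd.sum {f : ℕ → ℝ → ℝ} (s : Finset ℕ) (hf : ∀ c ∈ s, Bd (f c)) :
    Bd (fun y => ∑ c ∈ s, f c y) := by
  induction s using Finset.induction_on with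
  | empty => simpa using Bd.const 0
  | insert a s ha ih =>
    simp only [Finset.sum_insert ha]
    exact (hf a (by simp)).add (ih fun c hc => hf c (by simp [hc]))

lemma L_zero (b : ℕ) (k : ℤ) : L b k (fun _ => 0) = 0 := by
  have := L_smul b k 0 (fun _ => 0)
  simpa using this

lemma L_sum {b : ℕ} (hb : 2 ≤ b) (k : ℤ) {f : ℕ → ℝ → ℝ} (s : Finset ℕ)
    (hf : ∀ c ∈ s, Bd (f c)) :
    L b k (fun y => ∑ c ∈ s, f c y) = ∑ c ∈ s, L b k (f c) := by
  induction s using Finset.induction_on with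
  | empty => simpa using L_zero b k
  | insert a s ha ih =>
    simp only [Finset.sum_insert ha]
    rw [L_add hb k (hf a (by simp)) (Bd.sum s fun c hc => hf c (by simp [hc])),
      ih fun c hc => hf c (by simp [hc])]

lemma L_rec0 {b : ℕ} (hb : 2 ≤ b) (k : ℤ) {f : ℝ → ℝ} (hf : Bd f) :
    L b k f = (if k = 0 then f 0 else 0) +
      (∑ c ∈ Finset.Ico 1 b, L b k (fun y => f ((c + y) / b))
        + L b (k - 1) (fun y => f (y / b))) / b := by
  have h1 : L b k f = W b 0 k f + ∑' n, W b (n+1) k f := (W_summable hb k hf).tsum_eq_zero_add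
  rw [h1]
  congr 1
  simp only [W]
  rw [tsum_div_const, Summable.tsum_add _ (W_summable hb _ (hf.step0 hb)), Summable.tsum_finsetSum]
  · rfl
  · intro c hc
    exact W_summable hb _ (hf.step (Finset.mem_Ico.1 hc).2)
  · apply summable_sum
    intro c hc
    exact W_summable hb _ (hf.step (Finset.mem_Ico.1 hc).2)

/-- averaging operator -/
noncomputable def A (b : ℕ) (f : ℝ → ℝ) : ℝ → ℝ :=
  fun y => (1 / (b:ℝ)) * ∑ c ∈ Finset.range b, f ((c + y) / b)

lemma Bd.A {f : ℝ → ℝ} (hf : Bd f) (b : ℕ) : Bd (A b f) :=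
  (Bd.sum (f := fun c y => f ((c + y) / b)) (Finset.range b)
    fun _ hc => hf.step (Finset.mem_range.1 hc)).smul _

lemma L_rec {b : ℕ} (hb : 2 ≤ b) (k : ℤ) {f : ℝ → ℝ} (hf : Bd f) :
    L b k f = (if k = 0 then f 0 else 0) + L b k (A b f) +
      (L b (k - 1) (fun y => f (y / b)) - L b k (fun y => f (y / b))) / b := by
  rw [L_rec0 hb k hf]
  unfold A
  rw [L_smul, L_sum (f := fun c y => f ((c + y) / b)) hb k (Finset.range b)
    fun _ hc => hf.step (Finset.mem_range.1 hc)]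
  rw [Finset.range_eq_Ico, Finset.sum_eq_sum_Ico_succ_bot (by omega : 0 < b)]
  simp only [Nat.cast_zero, zero_add]
  ring

lemma L_one {b : ℕ} (hb : 2 ≤ b) (k : ℕ) : L b k (fun _ => 1) = b := by
  have hb0 : (0:ℝ) < b := by exact_mod_cast (by omega : 0 < b)
  induction k with
  | zero =>
    have h := L_rec0 hb 0 (Bd.const 1)
    rw [L_neg b (0 - 1) (by omega)] at h
    simp only [Finset.sum_const, Nat.card_Ico, nsmul_eq_mul, if_true] at h
    rw [Nat.cast_sub (by omega)] at h
    field_simp at h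
    push_cast at h ⊢
    linarith
  | succ k ih =>
    have h := L_rec0 hb ((k+1 : ℕ):ℤ) (Bd.const 1)
    rw [if_neg (by omega)] at h
    have e : ((k + 1 : ℕ) : ℤ) - 1 = k := by push_cast; ring
    rw [e, ih] at h
    simp only [Finset.sum_const, Nat.card_Ico, nsmul_eq_mul] at h
    rw [Nat.cast_sub (by omega)] at h
    field_simp at h
    push_cast at h ⊢
    linarith

/-- Lipschitz on the unit interval -/
def Lp (K : ℝ) (f : ℝ → ℝ) : Prop :=
  ∀ x ∈ Icc (0:ℝ) 1, ∀ y ∈ Icc (0:ℝ) 1, |f x - f y| ≤ K * |x - y|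

lemma Lp.nonneg {K : ℝ} {f : ℝ → ℝ} (hf : Lp K f) : 0 ≤ K := by
  have := hf 1 (by simp) 0 (by simp)
  simp only [sub_zero, abs_one, mul_one] at this
  exact (abs_nonneg _).trans this

lemma Lp.dev {K : ℝ} {f : ℝ → ℝ} (hf : Lp K f) {x : ℝ} (hx : x ∈ Icc (0:ℝ) 1) :
    |f x - f 0| ≤ K := by
  refine (hf x hx 0 (by simp)).trans ?_
  rw [sub_zero, abs_of_nonneg hx.1]
  have := hf.nonneg
  nlinarith [hx.2]

lemma Lp.bd {K : ℝ} {f : ℝ → ℝ} (hf : Lp K f) : Bd f := by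
  refine ⟨K + |f 0|, fun x hx => ?_⟩
  have h1 := hf.dev hx
  have h2 := abs_add_le (f x - f 0) (f 0)
  rw [sub_add_cancel] at h2
  linarith

lemma Lp.step {K : ℝ} {f : ℝ → ℝ} (hf : Lp K f) {b c : ℕ} (hc : c < b) :
    Lp (K / b) (fun y => f ((c + y) / b)) := by
  intro x hx y hy
  have hb0 : (0:ℝ) < b := by exact_mod_cast (by omega : 0 < b)
  refine (hf _ (mem_step hc hx) _ (mem_step hc hy)).trans (le_of_eq ?_)
  rw [← sub_div, add_sub_add_left_eq_sub, abs_div, abs_of_pos hb0]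
  ring

lemma Lp.step0 {K : ℝ} {f : ℝ → ℝ} (hf : Lp K f) {b : ℕ} (hb : 2 ≤ b) :
    Lp (K / b) (fun y => f (y / b)) := by
  have := hf.step (b := b) (c := 0) (by omega)
  simpa using this

lemma Lp.A {K : ℝ} {f : ℝ → ℝ} (hf : Lp K f) {b : ℕ} (hb : 2 ≤ b) : Lp (K / b) (A b f) := by
  intro x hx y hy
  have hb0 : (0:ℝ) < b := by exact_mod_cast (by omega : 0 < b)
  unfold Irwin.A
  rw [← mul_sub, ← Finset.sum_sub_distrib, abs_mul, abs_of_pos (by positivity : 0 < 1 / (b:ℝ))]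
  calc _ ≤ 1 / (b:ℝ) * ∑ c ∈ Finset.range b, (K / b * |x - y|) := by
        gcongr
        refine (Finset.abs_sum_le_sum_abs _ _).trans (Finset.sum_le_sum fun c hc => ?_)
        exact (hf.step (Finset.mem_range.1 hc)) x hx y hy
    _ = _ := by
        rw [Finset.sum_const, Finset.card_range, nsmul_eq_mul]
        field_simp

/-- difference of consecutive functionals -/
noncomputable def D (b j : ℕ) (f : ℝ → ℝ) : ℝ := L b j f - L b ((j:ℤ) + 1) f

lemma D_const {b : ℕ} (hb : 2 ≤ b) (j : ℕ) (a : ℝ) : D b j (fun _ => a) = 0 := by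
  have h : ∀ k : ℕ, L b k (fun _ => a) = a * b := by
    intro k
    have := L_smul b k a (fun _ => 1)
    rw [L_one hb] at this
    simpa using this
  unfold D
  have h2 := h (j+1)
  push_cast at h2
  rw [h, h2, sub_self]

lemma D_add {b : ℕ} (hb : 2 ≤ b) (j : ℕ) {f g : ℝ → ℝ} (hf : Bd f) (hg : Bd g) :
    D b j (fun y => f y + g y) = D b j f + D b j g := by
  unfold D
  rw [L_add hb _ hf hg, L_add hb _ hf hg]; ring

lemma D_smul (b : ℕ) (j : ℕ) (a : ℝ) (f : ℝ → ℝ) :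
    D b j (fun y => a * f y) = a * D b j f := by
  unfold D
  rw [L_smul, L_smul]; ring

lemma D_congr {b : ℕ} (hb : 2 ≤ b) (j : ℕ) {f g : ℝ → ℝ}
    (h : ∀ x ∈ Icc (0:ℝ) 1, f x = g x) : D b j f = D b j g := by
  unfold D
  rw [L_congr hb _ h, L_congr hb _ h]

lemma D_rec {b : ℕ} (hb : 2 ≤ b) (j : ℕ) {f : ℝ → ℝ} (hf : Bd f) :
    D b (j+1) f = D b (j+1) (A b f) +
      (D b j (fun y => f (y / b)) - D b (j+1) (fun y => f (y / b))) / b := by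
  unfold D
  rw [L_rec hb ((j+1 : ℕ):ℤ) hf, L_rec hb (((j+1 : ℕ):ℤ) + 1) hf, if_neg (by omega),
    if_neg (by omega)]
  have e : ((j + 1 : ℕ) : ℤ) - 1 = j := by push_cast; ring
  have e1 : ((j + 1 : ℕ) : ℤ) = j + 1 := by push_cast; ring
  have e2 : ((j + 1 : ℕ) : ℤ) + 1 - 1 = j + 1 := by push_cast; ring
  rw [e, e2, e1]
  ring

lemma D_rec0 {b : ℕ} (hb : 2 ≤ b) {f : ℝ → ℝ} (hf : Bd f) :
    D b 0 f = D b 0 (A b f) + (f 0 - L b 0 (fun y => f (y / b)) / b)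
      - D b 0 (fun y => f (y / b)) / b := by
  unfold D
  rw [L_rec hb ((0 : ℕ):ℤ) hf, L_rec hb (((0 : ℕ):ℤ) + 1) hf, if_pos (by omega),
    if_neg (by omega)]
  have e2 : ((0 : ℕ) : ℤ) + 1 - 1 = 0 := by simp
  rw [e2, L_neg b (((0:ℕ):ℤ) - 1) (by omega)]
  push_cast
  ring

lemma L_dev {b : ℕ} (hb : 2 ≤ b) (k : ℕ) {f : ℝ → ℝ} {K : ℝ} (hf : Lp K f) :
    |L b k f - f 0 * b| ≤ K * b := by
  have h1 := L_add hb k hf.bd (Bd.const (-1 * f 0))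
  have h2 := L_smul b k (-1 * f 0) (fun _ => 1)
  rw [L_one hb] at h2
  simp only [mul_one] at h2
  rw [h2] at h1
  have h3 := L_abs hb k (f := fun y => f y + -1 * f 0) (M := K) (fun x hx => by
    have := hf.dev hx
    rwa [neg_one_mul, ← sub_eq_add_neg])
  rw [h1] at h3
  convert h3 using 2
  ring

lemma src {b : ℕ} (hb : 2 ≤ b) {f : ℝ → ℝ} {K : ℝ} (hf : Lp K (fun y => f (y / b))) :
    |f 0 - L b 0 (fun y => f (y / b)) / b| ≤ K := by
  have hb0 : (0:ℝ) < b := by exact_mod_cast (by omega : 0 < b)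
  have h := L_dev hb 0 hf
  simp only [zero_div, Nat.cast_zero] at h
  have e : f 0 - L b 0 (fun y => f (y / b)) / b =
    -((L b 0 (fun y => f (y / b)) - f 0 * b) / b) := by field_simp; ring
  rw [e, abs_neg, abs_div, abs_of_pos hb0, div_le_iff₀ hb0]
  exact h

lemma boot (P : ℝ → Prop) (hcl : ∀ u : ℕ → ℝ, ∀ l, Tendsto u atTop (nhds l) → (∀ n, P (u n)) → P l)
    (c β : ℝ) (hc : P c) (h : ∀ c, P c → P (3/4 * c + β)) : P (4 * β) := by
  refine hcl (fun n => (3/4)^n * (c - 4 * β) + 4 * β) _ ?_ ?_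
  · have := (tendsto_pow_atTop_nhds_zero_of_lt_one (r := (3/4:ℝ)) (by norm_num) (by norm_num))
    simpa using (this.mul_const (c - 4 * β)).add_const (4 * β)
  · intro n
    induction n with
    | zero => simpa using hc
    | succ n ih =>
      convert h _ ih using 1
      ring

lemma D_crude {b : ℕ} (hb : 2 ≤ b) (j : ℕ) {f : ℝ → ℝ} {K : ℝ} (hf : Lp K f) :
    |D b j f| ≤ (2 * b) * K := by
  have h1 := L_dev hb j hf
  have h2 := L_dev hb (j+1) hf
  push_cast at h2
  unfold D
  rw [abs_le] at *
  constructor <;> linarith [h1.1, h1.2, h2.1, h2.2]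

lemma D_boot {b : ℕ} (hb : 2 ≤ b) (j : ℕ) (β : ℝ) (hβ : 0 ≤ β)
    (h : ∀ f K, Lp K f → |D b j f| ≤
      |D b j (A b f)| + β * K + |D b j (fun y => f (y / b))| / b) :
    ∀ f K, Lp K f → |D b j f| ≤ (4 * β) * K := by
  have hb2 : (2:ℝ) ≤ b := by exact_mod_cast hb
  have hb0 : (0:ℝ) < b := by linarith
  refine (boot (fun c => 0 ≤ c ∧ ∀ f K, Lp K f → |D b j f| ≤ c * K) ?_ (2 * b) β
    ⟨by positivity, fun f K hf => D_crude hb j hf⟩ ?_).2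
  · intro u l hu hP
    refine ⟨ge_of_tendsto' hu fun n => (hP n).1, fun f K hf => ?_⟩
    exact ge_of_tendsto' (hu.mul_const K) fun n => (hP n).2 f K hf
  · rintro c ⟨hc, hP⟩
    refine ⟨by positivity, fun f K hf => ?_⟩
    have h1 := h f K hf
    have h2 := hP _ _ (hf.A hb)
    have h3 := hP _ _ (hf.step0 hb)
    have hK := hf.nonneg
    have h4 : K / b ≤ K / 2 := by gcongr
    have h5 : c * (K / b) ≤ c * (K / 2) := by gcongr
    have h6 : |D b j (fun y => f (y / b))| / b ≤ (c * (K / 2)) / 2 := by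
      gcongr
      exact h3.trans h5
    nlinarith

lemma D_lip {b : ℕ} (hb : 2 ≤ b) (j : ℕ) :
    ∀ f K, Lp K f → |D b j f| ≤ (4 ^ (j+1) / (b:ℝ) ^ (2 * j + 1)) * K := by
  have hb2 : (2:ℝ) ≤ b := by exact_mod_cast hb
  have hb0 : (0:ℝ) < b := by linarith
  induction j with
  | zero =>
    have := D_boot hb 0 (1 / b) (by positivity) (fun f K hf => ?_)
    · intro f K hf
      convert this f K hf using 2
      ring
    · rw [D_rec0 hb hf.bd]
      have h1 := src hb (hf.step0 hb)
      have h1' : |f 0 - L b 0 (fun y => f (y / b)) / b| ≤ 1 / b * K := by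
        rw [one_div_mul_eq_div]; exact h1
      refine (abs_sub _ _).trans ?_
      rw [abs_div, abs_of_pos hb0]
      gcongr
      refine (abs_add_le _ _).trans ?_
      gcongr
  | succ j ih =>
    have := D_boot hb (j+1) ((4 ^ (j+1) / (b:ℝ) ^ (2 * j + 1)) / b^2) (by positivity)
      (fun f K hf => ?_)
    · intro f K hf
      have e : (4:ℝ) ^ (j + 1 + 1) / (b:ℝ) ^ (2 * (j + 1) + 1) =
        4 * ((4 ^ (j+1) / (b:ℝ) ^ (2 * j + 1)) / b^2) := by
        rw [div_div, ← pow_add, pow_succ (4:ℝ) (j+1)]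
        ring_nf
      rw [e]
      exact this f K hf
    · rw [D_rec hb j hf.bd]
      have h1 := ih _ _ (hf.step0 hb)
      refine (abs_add_le _ _).trans ?_
      rw [add_assoc]
      gcongr
      rw [abs_div, abs_of_pos hb0]
      have h2 := abs_sub (D b j (fun y => f (y / b))) (D b (j+1) (fun y => f (y / b)))
      calc _ ≤ (|D b j (fun y => f (y / b))| + |D b (j+1) (fun y => f (y / b))|) / b := by gcongr
        _ ≤ ((4 ^ (j+1) / (b:ℝ) ^ (2 * j + 1)) * (K / b) + |D b (j+1) (fun y => f (y / b))|) / b := by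
          gcongr
        _ = _ := by field_simp

lemma D_lip' {b : ℕ} (hb : 2 ≤ b) (j : ℕ) {f : ℝ → ℝ} {K K' : ℝ} (hf : Lp K f)
    (hf' : Lp K' (fun y => f (y / b))) :
    |D b j f| ≤ 4 ^ (j+1) * (K / (b:ℝ) ^ (2 * j + 2) + K' / (b:ℝ) ^ (2 * j)) := by
  have hb2 : (2:ℝ) ≤ b := by exact_mod_cast hb
  have hb0 : (0:ℝ) < b := by linarith
  have hK' := hf'.nonneg
  have hA := D_lip hb j _ _ (hf.A hb)
  have hS := D_lip hb j _ _ hf'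
  have e1 : 4 ^ (j+1) / (b:ℝ) ^ (2 * j + 1) * (K / b) = 4 ^ (j+1) * (K / (b:ℝ) ^ (2 * j + 2)) := by
    rw [pow_succ (b:ℝ) (2 * j + 1)]
    field_simp
  have hSb : |D b j (fun y => f (y / b))| / b ≤ 4 ^ j * (K' / (b:ℝ) ^ (2 * j)) := by
    rw [div_le_iff₀ hb0]
    refine hS.trans ?_
    have : 4 ^ j * (K' / (b:ℝ) ^ (2 * j)) * b - 4 ^ (j+1) / (b:ℝ) ^ (2 * j + 1) * K' =
      4 ^ j * K' / (b:ℝ) ^ (2 * j + 1) * (b ^ 2 - 4) := by field_simp; ring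
    have h4 : (0:ℝ) ≤ (b:ℝ)^2 - 4 := by nlinarith
    have : 0 ≤ 4 ^ j * K' / (b:ℝ) ^ (2 * j + 1) * ((b:ℝ) ^ 2 - 4) := by positivity
    linarith
  have hpos : 0 ≤ (4:ℝ) ^ j * (K' / (b:ℝ) ^ (2 * j)) := by positivity
  have key : |D b j f| ≤ |D b j (A b f)| + 4 ^ j * (K' / (b:ℝ) ^ (2 * j))
      + |D b j (fun y => f (y / b))| / b := by
    cases j with
    | zero =>
      rw [D_rec0 hb hf.bd]
      have h1 := src hb hf'
      refine (abs_sub _ _).trans ?_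
      rw [abs_div, abs_of_pos hb0]
      gcongr
      refine (abs_add_le _ _).trans ?_
      gcongr
      simpa using h1
    | succ j =>
      rw [D_rec hb j hf.bd]
      have h1 := D_lip hb j _ _ hf'
      refine (abs_add_le _ _).trans ?_
      rw [add_assoc]
      gcongr
      rw [abs_div, abs_of_pos hb0]
      have h2 := abs_sub (D b j (fun y => f (y / b))) (D b (j+1) (fun y => f (y / b)))
      calc _ ≤ (|D b j (fun y => f (y / b))| + |D b (j+1) (fun y => f (y / b))|) / b := by gcongr
        _ ≤ ((4 ^ (j+1) / (b:ℝ) ^ (2 * j + 1)) * K' + |D b (j+1) (fun y => f (y / b))|) / b := by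
          gcongr
        _ = _ := by field_simp; ring
  rw [pow_succ] at e1 hA ⊢
  nlinarith

lemma sum_blocks (g : ℕ → ℝ) (s A B : ℕ) (h : A ≤ B) :
    ∑ m ∈ Finset.Ico (A * s) (B * s), g m =
      ∑ q ∈ Finset.Ico A B, ∑ m ∈ Finset.Ico (q * s) ((q + 1) * s), g m := by
  induction B, h using Nat.le_induction with
  | base => simp
  | succ B hB ih =>
    rw [Finset.sum_Ico_succ_top hB, ← ih, Finset.sum_Ico_consecutive]
    · exact Nat.mul_le_mul_right _ hB
    · exact Nat.mul_le_mul_right _ (by omega)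

/-- summand of the Irwin sum -/
noncomputable def G (b k m : ℕ) : ℝ := if (Nat.digits b m).count 0 = k then (1:ℝ) / m else 0

lemma block_eq {b : ℕ} (hb : 2 ≤ b) (k n p : ℕ) (hp : 1 ≤ p) :
    ∑ m ∈ Finset.Ico (p * b ^ n) ((p + 1) * b ^ n), G b k m =
      W b n ((k:ℤ) - (Nat.digits b p).count 0) (fun y => 1 / ((p:ℝ) + y)) := by
  induction n generalizing p with
  | zero =>
    simp only [pow_zero, mul_one, Nat.Ico_succ_singleton, Finset.sum_singleton, W, G, add_zero]
    congr 1
    simp only [eq_iff_iff]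
    omega
  | succ n ih =>
    have hb0 : (0:ℝ) < b := by exact_mod_cast (by omega : 0 < b)
    rw [pow_succ', ← mul_assoc, ← mul_assoc, sum_blocks _ _ _ _ (Nat.mul_le_mul_right _ (by omega))]
    rw [Finset.sum_congr rfl fun q hq => ih q ?_]
    swap
    · have := (Finset.mem_Ico.1 hq).1
      nlinarith
    rw [Finset.sum_Ico_eq_sum_range]
    have e : (p + 1) * b - p * b = b := by
      rw [add_mul, one_mul]; omega
    rw [e, Finset.range_eq_Ico, Finset.sum_eq_sum_Ico_succ_bot (by omega : 0 < b)]
    simp only [W]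
    have hd : ∀ c, c < b → Nat.digits b (p * b + c) = c :: Nat.digits b p := by
      intro c hc
      have := Nat.digits_add b (by omega) c p hc (Or.inr (by omega))
      rwa [add_comm, mul_comm] at this
    rw [eq_div_iff hb0.ne', add_comm, add_mul, Finset.sum_mul]
    congr 1
    · refine Finset.sum_congr rfl fun c hc => ?_
      have hc' := Finset.mem_Ico.1 hc
      rw [hd c hc'.2, List.count_cons_of_ne (by omega), mul_comm, ← W_smul]
      refine W_congr hb _ _ _ _ fun x hx => ?_
      have hp' : (1:ℝ) ≤ p := by exact_mod_cast hp
      have hx0 := hx.1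
      have : (0:ℝ) < p * b + c + x := by positivity
      push_cast
      field_simp
      try ring
    · rw [hd 0 (by omega), List.count_cons_self, mul_comm, ← W_smul]
      push_cast
      rw [← sub_sub]
      refine W_congr hb _ _ _ _ fun x hx => ?_
      have hp' : (1:ℝ) ≤ p := by exact_mod_cast hp
      have hx0 := hx.1
      have : (0:ℝ) < p * b + x := by positivity
      field_simp
      try ring

lemma level_eq {b : ℕ} (hb : 2 ≤ b) (k n : ℕ) :
    ∑ m ∈ Finset.Ico (b ^ n) (b ^ (n+1)), G b k m =
      ∑ a ∈ Finset.Ico 1 b, W b n k (fun y => 1 / ((a:ℝ) + y)) := by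
  have := sum_blocks (G b k) (b ^ n) 1 b (by omega)
  rw [one_mul, ← pow_succ'] at this
  rw [this]
  refine Finset.sum_congr rfl fun a ha => ?_
  have ha' := Finset.mem_Ico.1 ha
  rw [block_eq hb k n a ha'.1, Nat.digits_of_lt b a (by omega) ha'.2, List.count_singleton]
  simp [show a ≠ 0 by omega]

lemma bd_inv {a : ℝ} (ha : 1 ≤ a) : Bd (fun y => 1 / (a + y)) := by
  refine ⟨1, fun x hx => ?_⟩
  have : 0 < a + x := by linarith [hx.1]
  rw [abs_of_pos (by positivity), div_le_one this]
  linarith [hx.1]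

lemma irwin_eq {b : ℕ} (hb : 2 ≤ b) (k : ℕ) :
    irwinSum b 0 k = L b k (fun y => ∑ a ∈ Finset.Ico 1 b, 1 / ((a:ℝ) + y)) := by
  have hbd : ∀ a ∈ Finset.Ico 1 b, Bd (fun y => 1 / ((a:ℝ) + y)) := fun a ha =>
    bd_inv (by exact_mod_cast (Finset.mem_Ico.1 ha).1)
  have hS : HasSum (fun n => ∑ a ∈ Finset.Ico 1 b, W b n k (fun y => 1 / ((a:ℝ) + y)))
      (L b k (fun y => ∑ a ∈ Finset.Ico 1 b, 1 / ((a:ℝ) + y))) := by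
    rw [L_sum (f := fun (a:ℕ) y => 1 / ((a:ℝ) + y)) hb k _ hbd]
    exact hasSum_sum fun a ha => (W_summable hb k (hbd a ha)).hasSum
  set l := L b k (fun y => ∑ a ∈ Finset.Ico 1 b, 1 / ((a:ℝ) + y)) with hl
  set g : ℕ → ℝ := fun m => if 0 < m ∧ (Nat.digits b m).count 0 = k then (1 : ℝ) / m else 0 with hg
  have hg0 : ∀ m, 0 ≤ g m := by
    intro m; simp only [hg]; split_ifs <;> positivity
  have hpart : ∀ N, ∑ m ∈ Finset.range (b ^ N), g m =
      ∑ n ∈ Finset.range N, ∑ a ∈ Finset.Ico 1 b, W b n k (fun y => 1 / ((a:ℝ) + y)) := by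
    intro N
    induction N with
    | zero => simp [hg]
    | succ N ih =>
      rw [Finset.sum_range_succ, ← ih, ← level_eq hb k N, Finset.range_eq_Ico, Finset.range_eq_Ico,
        ← Finset.sum_Ico_consecutive g (Nat.zero_le (b ^ N)) (Nat.pow_le_pow_right (by omega) (by omega))]
      congr 1
      refine Finset.sum_congr rfl fun m hm => ?_
      have h1 := (Finset.mem_Ico.1 hm).1
      have h2 : 0 < b ^ N := Nat.pow_pos (by omega)
      simp only [hg, G]
      simp [show 0 < m by omega]
  have hnn : ∀ n, 0 ≤ ∑ a ∈ Finset.Ico 1 b, W b n k (fun y => 1 / ((a:ℝ) + y)) := by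
    intro n
    rw [← level_eq hb]
    refine Finset.sum_nonneg fun m _ => ?_
    unfold G; split_ifs <;> positivity
  have hsum : Summable g := by
    refine summable_of_sum_range_le (c := l) hg0 fun N => ?_
    calc _ ≤ ∑ m ∈ Finset.range (b ^ N), g m := by
          refine Finset.sum_le_sum_of_subset_of_nonneg ?_ fun m _ _ => hg0 m
          exact Finset.range_subset_range.2 (Nat.lt_pow_self (by omega)).le
      _ ≤ l := by
          rw [hpart]
          exact sum_le_hasSum _ (fun n _ => hnn n) hS
  have ht1 := hsum.hasSum.tendsto_sum_nat.comp (tendsto_pow_atTop_atTop_of_one_lt (by omega : 1 < b))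
  have ht2 := hS.tendsto_sum_nat
  refine tendsto_nhds_unique ht1 ?_
  refine ht2.congr fun N => ?_
  exact (hpart N).symm

/-- `ψ(1+t)+γ` -/
noncomputable def phi (t : ℝ) : ℝ := ∑' a : ℕ, (1 / ((a:ℝ) + 1) - 1 / ((a:ℝ) + 1 + t))

lemma zeta_summable {s : ℕ} (hs : 2 ≤ s) : Summable fun n : ℕ => 1 / ((n : ℝ) + 1) ^ s := by
  have := (summable_nat_add_iff 1).2 (Real.summable_one_div_nat_pow.2 (by omega : 1 < s))
  simpa using this

lemma phi_summable {t : ℝ} (ht : 0 ≤ t) :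
    Summable fun a : ℕ => (1 / ((a:ℝ) + 1) - 1 / ((a:ℝ) + 1 + t)) := by
  refine Summable.of_nonneg_of_le (fun a => ?_) (fun a => ?_)
    ((zeta_summable (le_refl 2)).mul_left t)
  · rw [sub_nonneg]
    apply one_div_le_one_div_of_le <;> linarith [(Nat.cast_nonneg a : (0:ℝ) ≤ a)]
  · have h : 1 / ((a:ℝ) + 1) - 1 / ((a:ℝ) + 1 + t) = t * (1 / (((a:ℝ) + 1) * ((a:ℝ) + 1 + t))) := by
      field_simp; ring
    rw [h, pow_two]
    have ha : (0:ℝ) ≤ a := Nat.cast_nonneg a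
    refine mul_le_mul_of_nonneg_left (one_div_le_one_div_of_le (by positivity) ?_) ht
    nlinarith [mul_nonneg ha ht]

lemma phi_tendsto {t : ℝ} (ht : 0 ≤ t) :
    Tendsto (fun N => ∑ a ∈ Finset.range N, (1 / ((a:ℝ) + 1) - 1 / ((a:ℝ) + 1 + t))) atTop
      (nhds (phi t)) := (phi_summable ht).hasSum.tendsto_sum_nat

lemma phi_lip {s t : ℝ} (hs : 0 ≤ s) (ht : 0 ≤ t) : |phi s - phi t| ≤ zetaR 2 * |s - t| := by
  unfold phi zetaR
  rw [← (phi_summable hs).tsum_sub (phi_summable ht), ← tsum_mul_right, ← Real.norm_eq_abs]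
  refine tsum_of_norm_bounded ((zeta_summable (le_refl 2)).mul_right _).hasSum fun a => ?_
  have h : 1 / ((a:ℝ) + 1) - 1 / ((a:ℝ) + 1 + s) - (1 / ((a:ℝ) + 1) - 1 / ((a:ℝ) + 1 + t)) =
    (1 / (((a:ℝ) + 1 + t) * ((a:ℝ) + 1 + s))) * (s - t) := by field_simp; ring
  rw [h, Real.norm_eq_abs, abs_mul, abs_of_pos (by positivity), pow_two]
  have ha : (0:ℝ) ≤ a := Nat.cast_nonneg a
  refine mul_le_mul_of_nonneg_right (one_div_le_one_div_of_le (by positivity) ?_) (abs_nonneg _)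
  nlinarith [mul_nonneg ha ht, mul_nonneg ha hs, mul_nonneg hs ht]

lemma phi_shift (n : ℕ) {y : ℝ} (hy : 0 ≤ y) :
    phi (y + n) - phi y = ∑ a ∈ Finset.range n, 1 / ((a:ℝ) + 1 + y) := by
  have h1 : ∀ t : ℝ, 0 ≤ t → phi (t + 1) - phi t = 1 / (1 + t) := by
    intro t ht
    have h2 := (phi_tendsto (by linarith : 0 ≤ t + 1)).sub (phi_tendsto ht)
    refine tendsto_nhds_unique h2 ?_
    have h3 : Tendsto (fun N : ℕ => 1 / (1 + t) - 1 / ((N:ℝ) + (1 + t))) atTop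
        (nhds (1 / (1 + t) - 0)) := by
      refine tendsto_const_nhds.sub ?_
      simp only [one_div]
      exact tendsto_inv_atTop_zero.comp
        (tendsto_atTop_add_const_right _ _ tendsto_natCast_atTop_atTop)
    rw [sub_zero] at h3
    refine h3.congr fun N => ?_
    induction N with
    | zero => simp
    | succ N ih =>
      rw [Finset.sum_range_succ, Finset.sum_range_succ]
      push_cast
      have e1 : (N:ℝ) + 1 + (t + 1) = N + 1 + (1 + t) := by ring
      have e2 : (N:ℝ) + 1 + t = N + (1 + t) := by ring
      rw [e1, e2]
      linarith
  induction n with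
  | zero => simp
  | succ n ih =>
    rw [Finset.sum_range_succ, ← ih]
    have := h1 (y + n) (by positivity)
    push_cast
    rw [← add_assoc, show (n:ℝ) + 1 + y = 1 + (y + n) by ring]
    linarith

lemma sum_mul_blocks (g : ℕ → ℝ) (b N : ℕ) :
    ∑ m ∈ Finset.range (N * b), g m =
      ∑ c ∈ Finset.range b, ∑ a ∈ Finset.range N, g (a * b + c) := by
  rw [Finset.sum_comm]
  induction N with
  | zero => simp
  | succ N ih =>
    rw [Finset.sum_range_succ, ← ih, add_mul, one_mul, Finset.sum_range_add]

lemma harm_tendsto {b : ℕ} (hb : 2 ≤ b) :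
    Tendsto (fun N : ℕ => ∑ a ∈ Finset.range (N * b), 1 / ((a:ℝ) + 1)
      - ∑ a ∈ Finset.range N, 1 / ((a:ℝ) + 1)) atTop (nhds (Real.log b)) := by
  have h := Real.tendsto_harmonic_sub_log
  have hb' : Tendsto (fun N : ℕ => N * b) atTop atTop :=
    tendsto_id.atTop_mul_const' (by omega)
  have h2 := ((h.comp hb').sub h).add_const (Real.log b)
  rw [sub_self, zero_add] at h2
  refine h2.congr' ?_
  filter_upwards [eventually_gt_atTop 0] with N hN
  have e : ∀ n : ℕ, ((harmonic n : ℚ) : ℝ) = ∑ a ∈ Finset.range n, 1 / ((a:ℝ) + 1) := by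
    intro n
    simp [harmonic]
  have hN' : (N:ℝ) ≠ 0 := by exact_mod_cast hN.ne'
  have hbb : (b:ℝ) ≠ 0 := by exact_mod_cast (by omega : b ≠ 0)
  simp only [Function.comp, e]
  push_cast
  rw [Real.log_mul hN' hbb]
  ring

lemma phi_mult {b : ℕ} (hb : 2 ≤ b) {y : ℝ} (hy : 0 ≤ y) :
    ∑ c ∈ Finset.range b, phi ((c + y) / b) = b * phi (y + (b - 1 : ℕ)) - b * Real.log b := by
  have hb0 : (0:ℝ) < b := by exact_mod_cast (by omega : 0 < b)
  have h1 : Tendsto (fun N => ∑ c ∈ Finset.range b, ∑ a ∈ Finset.range N,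
      (1 / ((a:ℝ) + 1) - 1 / ((a:ℝ) + 1 + (c + y) / b))) atTop
      (nhds (∑ c ∈ Finset.range b, phi ((c + y) / b))) :=
    tendsto_finsetSum _ fun c _ => phi_tendsto (by positivity)
  have hb' : Tendsto (fun N : ℕ => N * b) atTop atTop :=
    tendsto_id.atTop_mul_const' (by omega)
  have h2 := (((phi_tendsto (t := y + (b - 1 : ℕ)) (by positivity)).comp hb').const_mul (b:ℝ)).sub
    ((harm_tendsto hb).const_mul (b:ℝ))
  refine tendsto_nhds_unique h1 (h2.congr fun N => ?_)
  simp only [Function.comp, Finset.sum_sub_distrib]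
  have h3 := sum_mul_blocks (fun a => 1 / ((a:ℝ) + 1 + (y + (b - 1 : ℕ)))) b N
  rw [h3]
  rw [Finset.sum_const, Finset.card_range, nsmul_eq_mul, mul_sub, mul_sub]
  have h4 : ∑ c ∈ Finset.range b, ∑ a ∈ Finset.range N, 1 / ((a:ℝ) + 1 + (c + y) / b) =
     ∑ c ∈ Finset.range b, (b:ℝ) * ∑ a ∈ Finset.range N,
      1 / (((a * b + c : ℕ):ℝ) + 1 + (y + (b - 1 : ℕ))) := by
    refine Finset.sum_congr rfl fun c _ => ?_
    rw [Finset.mul_sum]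
    refine Finset.sum_congr rfl fun a _ => ?_
    rw [Nat.cast_sub (by omega)]
    push_cast
    have e : (a:ℝ) * b + c + 1 + (y + (b - 1)) = b * ((a:ℝ) + 1 + (c + y) / b) := by
      field_simp; ring
    rw [e]
    have : 0 < (a:ℝ) + 1 + (c + y) / b := by positivity
    field_simp
  rw [h4, ← Finset.mul_sum]
  ring

lemma phi_Lp : Lp (zetaR 2) phi := fun _ hx _ hy => phi_lip hx.1 hy.1

lemma irwin_exact {b : ℕ} (hb : 2 ≤ b) (j : ℕ) :
    irwinSum b 0 (j+1) = b * Real.log b - D b j (fun y => phi (y / b)) / b := by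
  have hb0 : (0:ℝ) < b := by exact_mod_cast (by omega : 0 < b)
  have h := L_rec hb ((j:ℤ)+1) phi_Lp.bd
  rw [if_neg (by omega)] at h
  have hA : L b ((j:ℤ)+1) (A b phi) = L b ((j:ℤ)+1)
      (fun y => phi y + ((∑ a ∈ Finset.Ico 1 b, 1 / ((a:ℝ) + y)) + (-Real.log b))) := by
    refine L_congr hb _ fun y hy => ?_
    unfold A
    rw [phi_mult hb hy.1]
    have := phi_shift (b-1) hy.1
    rw [Finset.sum_Ico_eq_sum_range]
    have e : ∑ i ∈ Finset.range (b-1), 1 / (((1 + i : ℕ):ℝ) + y) =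
        ∑ a ∈ Finset.range (b-1), 1 / ((a:ℝ) + 1 + y) := by
      refine Finset.sum_congr rfl fun a _ => ?_
      push_cast
      rw [add_comm (1:ℝ)]
    rw [e, ← this]
    field_simp
    ring
  have hbd : Bd (fun y => ∑ a ∈ Finset.Ico 1 b, 1 / ((a:ℝ) + y)) :=
    Bd.sum (f := fun (a:ℕ) y => 1 / ((a:ℝ) + y)) _ fun a ha =>
      bd_inv (by exact_mod_cast (Finset.mem_Ico.1 ha).1)
  have hc : L b ((j:ℤ)+1) (fun _ => -Real.log b) = -(b * Real.log b) := by
    have h1 := L_smul b ((j:ℤ)+1) (-Real.log b) (fun _ => 1)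
    have h2 := L_one hb (j+1)
    push_cast at h2
    rw [h2] at h1
    simp only [mul_one] at h1
    rw [h1]; ring
  rw [hA, L_add hb _ phi_Lp.bd (hbd.add (Bd.const _)), L_add hb _ hbd (Bd.const _), hc] at h
  have hI := irwin_eq hb (j+1)
  push_cast at hI
  rw [hI]
  rw [add_sub_cancel_right] at h
  unfold D
  linarith

/-- Taylor remainder of `phi` -/
noncomputable def rem (t : ℝ) : ℝ :=
  phi t - (zetaR 2 * t - zetaR 3 * t ^ 2 + zetaR 4 * t ^ 3)

lemma rem_hasSum {t : ℝ} (ht : 0 ≤ t) :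
    HasSum (fun a : ℕ => -(t ^ 4 / (((a:ℝ) + 1) ^ 4 * ((a:ℝ) + 1 + t)))) (rem t) := by
  have h1 := (phi_summable ht).hasSum
  have h2 := ((zeta_summable (le_refl 2)).hasSum).mul_right t
  have h3 := ((zeta_summable (by norm_num : 2 ≤ 3)).hasSum).mul_right (t ^ 2)
  have h4 := ((zeta_summable (by norm_num : 2 ≤ 4)).hasSum).mul_right (t ^ 3)
  refine (h1.sub ((h2.sub h3).add h4)).congr_fun ?_ 
  intro a
  have : 0 < (a:ℝ) + 1 + t := by positivity
  field_simp
  ring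

lemma rem_term {n s t T : ℝ} (hn : 1 ≤ n) (hs : 0 ≤ s) (ht : 0 ≤ t) (hsT : s ≤ T) (htT : t ≤ T)
    (hT : T ≤ 1) :
    |-(s ^ 4 / (n ^ 4 * (n + s))) - -(t ^ 4 / (n ^ 4 * (n + t)))| ≤
      1 / n ^ 4 * (7 * T ^ 3 * |s - t|) := by
  have hn0 : 0 < n := by linarith
  have hT0 : 0 ≤ T := hs.trans hsT
  have e : -(s ^ 4 / (n ^ 4 * (n + s))) - -(t ^ 4 / (n ^ 4 * (n + t))) =
      -(1 / n ^ 4 * ((n * (t ^ 3 + t ^ 2 * s + t * s ^ 2 + s ^ 3)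
        + t * s * (t ^ 2 + t * s + s ^ 2)) / ((n + t) * (n + s)) * (s - t))) := by
    have : 0 < n + s := by positivity
    have : 0 < n + t := by positivity
    field_simp
    ring
  rw [e, abs_neg, abs_mul, abs_mul, abs_of_pos (by positivity : 0 < 1 / n ^ 4),
    abs_of_nonneg (by positivity : 0 ≤ (n * (t ^ 3 + t ^ 2 * s + t * s ^ 2 + s ^ 3)
        + t * s * (t ^ 2 + t * s + s ^ 2)) / ((n + t) * (n + s)))]
  refine mul_le_mul_of_nonneg_left (mul_le_mul_of_nonneg_right ?_ (abs_nonneg _)) (by positivity)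
  rw [div_le_iff₀ (by positivity)]
  have h1 : n * (t ^ 3 + t ^ 2 * s + t * s ^ 2 + s ^ 3) ≤
      n * (T ^ 3 + T ^ 2 * T + T * T ^ 2 + T ^ 3) := by gcongr
  have h2 : t * s * (t ^ 2 + t * s + s ^ 2) ≤ T * T * (T ^ 2 + T * T + T ^ 2) := by gcongr
  have h3 : n * n ≤ (n + t) * (n + s) := by gcongr <;> linarith
  have h4 : 7 * T ^ 3 * (n * n) ≤ 7 * T ^ 3 * ((n + t) * (n + s)) := by gcongr
  have h5 : T * T ^ 3 ≤ 1 * T ^ 3 := by gcongr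
  have h6 : T ^ 3 * 1 ≤ T ^ 3 * (n * n) := by gcongr; nlinarith
  have h7 : T ^ 3 * n ≤ T ^ 3 * (n * n) := by gcongr; nlinarith
  nlinarith

lemma rem_lip {s t T : ℝ} (hs : 0 ≤ s) (ht : 0 ≤ t) (hsT : s ≤ T) (htT : t ≤ T)
    (hT : T ≤ 1) : |rem s - rem t| ≤ zetaR 4 * (7 * T ^ 3 * |s - t|) := by
  have h := (rem_hasSum hs).sub (rem_hasSum ht)
  rw [← h.tsum_eq, ← Real.norm_eq_abs]
  refine tsum_of_norm_bounded
    ((zeta_summable (by norm_num : 2 ≤ 4)).hasSum.mul_right (7 * T ^ 3 * |s - t|)) fun a => ?_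
  exact rem_term (by linarith [(Nat.cast_nonneg a : (0:ℝ) ≤ a)]) hs ht hsT htT hT

lemma rem_Lp {s : ℝ} (hs : 1 ≤ s) : Lp (7 * zetaR 4 / s ^ 4) (fun y => rem (y / s)) := by
  intro x hx y hy
  have hs0 : 0 < s := by linarith
  have := rem_lip (T := 1 / s) (div_nonneg hx.1 hs0.le) (div_nonneg hy.1 hs0.le)
    (by gcongr; exact hx.2) (by gcongr; exact hy.2) (by rw [div_le_one hs0]; exact hs)
  refine this.trans (le_of_eq ?_)
  rw [← sub_div, abs_div, abs_of_pos hs0]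
  field_simp

lemma D_rem {b : ℕ} (hb : 2 ≤ b) (j : ℕ) :
    |D b j (fun y => rem (y / b))| ≤
      4 ^ (j+1) * (7 * zetaR 4 / (b:ℝ) ^ 4 / (b:ℝ) ^ (2 * j + 2)
        + 7 * zetaR 4 / ((b:ℝ) * b) ^ 4 / (b:ℝ) ^ (2 * j)) := by
  have hb2 : (2:ℝ) ≤ b := by exact_mod_cast hb
  refine D_lip' hb j (rem_Lp (by linarith)) ?_
  have := rem_Lp (s := (b:ℝ) * b) (by nlinarith)
  simpa only [div_div] using this

lemma Lp_pow (i : ℕ) {s : ℝ} (hs : 0 < s) : Lp (i / s ^ i) (fun y => (y / s) ^ i) := by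
  intro x hx y hy
  simp only [div_pow]
  rw [← sub_div, abs_div, abs_of_pos (by positivity : 0 < s ^ i), div_mul_eq_mul_div]
  gcongr
  induction i with
  | zero => simp
  | succ i ih =>
    have e : x ^ (i+1) - y ^ (i+1) = (x ^ i - y ^ i) * x + y ^ i * (x - y) := by ring
    rw [e]
    refine (abs_add_le _ _).trans ?_
    rw [abs_mul, abs_mul, abs_of_nonneg hx.1, abs_of_nonneg (pow_nonneg hy.1 i)]
    have h1 : |x ^ i - y ^ i| * x ≤ |x ^ i - y ^ i| * 1 :=
      mul_le_mul_of_nonneg_left hx.2 (abs_nonneg _)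
    have h2 : y ^ i * |x - y| ≤ 1 * |x - y| :=
      mul_le_mul_of_nonneg_right (pow_le_one₀ hy.1 hy.2) (abs_nonneg _)
    push_cast
    linarith

lemma bd_pow (i : ℕ) : Bd (fun y => y ^ i) := by
  have := (Lp_pow i one_pos).bd
  simpa using this

/-- moments -/
noncomputable def mo (b j i : ℕ) : ℝ := D b j (fun y => y ^ i)

lemma mo_bound {b : ℕ} (hb : 2 ≤ b) (j i : ℕ) :
    |mo b j i| ≤ 4 ^ (j+1) * (i / (b:ℝ) ^ (2 * j + 2) + i / (b:ℝ) ^ i / (b:ℝ) ^ (2 * j)) := by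
  have hb2 : (2:ℝ) ≤ b := by exact_mod_cast hb
  refine D_lip' hb j ?_ (Lp_pow i (by linarith))
  simpa using Lp_pow i one_pos

lemma D_poly {b : ℕ} (hb : 2 ≤ b) (j : ℕ) (p q r s : ℝ) :
    D b j (fun y => p * y ^ 3 + (q * y ^ 2 + (r * y ^ 1 + s))) =
      p * mo b j 3 + q * mo b j 2 + r * mo b j 1 := by
  have h1 := (bd_pow 1).smul r
  have h2 := (bd_pow 2).smul q
  have h3 := (bd_pow 3).smul p
  have h0 := Bd.const s
  rw [D_add hb j h3 (h2.add (h1.add h0)), D_add hb j h2 (h1.add h0), D_add hb j h1 h0,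
    D_smul, D_smul, D_smul, D_const hb]
  unfold mo
  ring

lemma D_scale (b j i : ℕ) : D b j (fun y => (y / b) ^ i) = 1 / (b:ℝ) ^ i * mo b j i := by
  unfold mo
  rw [← D_smul]
  congr 1
  funext y
  rw [div_pow]; ring

lemma A_pow1 {b : ℕ} (hb : 2 ≤ b) (y : ℝ) :
    A b (fun y => y ^ 1) y = 1 / b * y ^ 1 + ((b:ℝ) - 1) / (2 * b) := by
  have hb0 : (0:ℝ) < b := by exact_mod_cast (by omega : 0 < b)
  have h : ∀ n : ℕ, ∑ c ∈ Finset.range n, ((c:ℝ) + y) ^ 1 = n * y + n * (n - 1) / 2 := by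
    intro n
    induction n with
    | zero => simp
    | succ n ih => rw [Finset.sum_range_succ, ih]; push_cast; ring
  unfold A
  simp only [div_pow]
  rw [← Finset.sum_div, h]
  field_simp
  try ring

lemma A_pow2 {b : ℕ} (hb : 2 ≤ b) : ∃ C : ℝ, ∀ y,
    A b (fun y => y ^ 2) y = 1 / b ^ 2 * y ^ 2 + (((b:ℝ) - 1) / b ^ 2 * y ^ 1 + C) := by
  have hb0 : (0:ℝ) < b := by exact_mod_cast (by omega : 0 < b)
  have h : ∀ (n : ℕ) (y : ℝ), ∑ c ∈ Finset.range n, ((c:ℝ) + y) ^ 2 =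
      n * y ^ 2 + n * (n - 1) * y + (n - 1) * n * (2 * n - 1) / 6 := by
    intro n y
    induction n with
    | zero => simp
    | succ n ih => rw [Finset.sum_range_succ, ih]; push_cast; ring
  refine ⟨((b:ℝ) - 1) * b * (2 * b - 1) / 6 / b ^ 3, fun y => ?_⟩
  unfold A
  simp only [div_pow]
  rw [← Finset.sum_div, h]
  field_simp
  try ring

lemma A_pow3 {b : ℕ} (hb : 2 ≤ b) : ∃ C : ℝ, ∀ y,
    A b (fun y => y ^ 3) y = 1 / b ^ 3 * y ^ 3 + (3 * ((b:ℝ) - 1) / (2 * b ^ 3) * y ^ 2 +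
      (((b:ℝ) - 1) * (2 * b - 1) / (2 * b ^ 3) * y ^ 1 + C)) := by
  have hb0 : (0:ℝ) < b := by exact_mod_cast (by omega : 0 < b)
  have h : ∀ (n : ℕ) (y : ℝ), ∑ c ∈ Finset.range n, ((c:ℝ) + y) ^ 3 =
      n * y ^ 3 + 3 * n * (n - 1) / 2 * y ^ 2 + (n - 1) * n * (2 * n - 1) / 2 * y
        + (n * (n - 1) / 2) ^ 2 := by
    intro n y
    induction n with
    | zero => simp
    | succ n ih => rw [Finset.sum_range_succ, ih]; push_cast; ring
  refine ⟨((b:ℝ) * (b - 1) / 2) ^ 2 / b ^ 4, fun y => ?_⟩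
  unfold A
  simp only [div_pow]
  rw [← Finset.sum_div, h]
  field_simp
  try ring

lemma mo1_rec {b : ℕ} (hb : 2 ≤ b) (j : ℕ) :
    ((b:ℝ) ^ 2 - b + 1) * mo b (j+1) 1 = mo b j 1 := by
  have hb0 : (0:ℝ) < b := by exact_mod_cast (by omega : 0 < b)
  have h := D_rec hb j (bd_pow 1)
  have hp := D_poly hb (j+1) 0 0 (1 / b) (((b:ℝ) - 1) / (2 * b))
  rw [D_congr hb (g := A b (fun y => y ^ 1)) _ (fun x _ => by rw [A_pow1 hb]; ring)] at hp
  rw [hp, D_scale, D_scale] at h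
  change mo b (j+1) 1 = _ at h
  field_simp at h
  linarith

lemma mo1_zero {b : ℕ} (hb : 2 ≤ b) :
    mo b 0 1 = -((b - 1) * b ^ 2) / (2 * ((b:ℝ) ^ 2 - b + 1) ^ 2) := by
  have hb2 : (2:ℝ) ≤ b := by exact_mod_cast hb
  have hb0 : (0:ℝ) < b := by linarith
  have hQ : 0 < (b:ℝ) ^ 2 - b + 1 := by nlinarith
  have h := D_rec0 hb (bd_pow 1)
  have hp := D_poly hb 0 0 0 (1 / b) (((b:ℝ) - 1) / (2 * b))
  rw [D_congr hb (g := A b (fun y => y ^ 1)) _ (fun x _ => by rw [A_pow1 hb]; ring)] at hp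
  have hsc : L b 0 (fun y => (y / b) ^ 1) = 1 / b * L b 0 (fun y => y ^ 1) := by
    rw [← L_smul]; congr 1; funext y; ring
  rw [hp, D_scale, hsc] at h
  change mo b 0 1 = _ at h
  have hL := L_rec hb 0 (bd_pow 1)
  rw [hsc, L_neg b (0-1) (by omega)] at hL
  have hA : L b 0 (A b (fun y => y ^ 1)) =
      1 / b * L b 0 (fun y => y ^ 1) + ((b:ℝ) - 1) / (2 * b) * b := by
    rw [L_congr hb 0 (fun x _ => A_pow1 hb x),
      L_add hb 0 ((bd_pow 1).smul _) (Bd.const _), L_smul]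
    congr 1
    have h1 := L_smul b 0 (((b:ℝ) - 1) / (2 * b)) (fun _ => 1)
    have h2 := L_one hb 0
    push_cast at h2
    rw [h2] at h1
    simpa using h1
  rw [hA] at hL
  simp only [if_true] at hL
  set l := L b 0 (fun y => y ^ 1) with hl
  set m := mo b 0 1 with hm
  have hl' : ((b:ℝ) ^ 2 - b + 1) * l = b ^ 2 * (b - 1) / 2 := by
    field_simp at hL
    ring_nf at hL ⊢
    linarith
  have hm' : ((b:ℝ) ^ 2 - b + 1) * m = - l := by
    field_simp at h
    ring_nf at h ⊢
    linarith
  rw [eq_div_iff (by positivity)]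
  have : m * (2 * ((b:ℝ) ^ 2 - b + 1) ^ 2) =
    2 * ((b:ℝ) ^ 2 - b + 1) * (((b:ℝ) ^ 2 - b + 1) * m) := by ring
  rw [this, hm']
  linarith

lemma mo1_eq {b : ℕ} (hb : 2 ≤ b) (j : ℕ) :
    mo b j 1 = -((b - 1) * b ^ 2) / (2 * ((b:ℝ) ^ 2 - b + 1) ^ (j + 2)) := by
  have hb2 : (2:ℝ) ≤ b := by exact_mod_cast hb
  have hQ : 0 < (b:ℝ) ^ 2 - b + 1 := by nlinarith
  induction j with
  | zero => exact mo1_zero hb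
  | succ j ih =>
    have h := mo1_rec hb j
    rw [ih] at h
    rw [eq_div_iff (by positivity)] at h ⊢
    rw [← h]
    ring

lemma mo2_rec {b : ℕ} (hb : 2 ≤ b) (j : ℕ) :
    ((b:ℝ) ^ 3 - b + 1) * mo b (j+1) 2 = b * (b - 1) * mo b (j+1) 1 + mo b j 2 := by
  have hb0 : (0:ℝ) < b := by exact_mod_cast (by omega : 0 < b)
  have h := D_rec hb j (bd_pow 2)
  obtain ⟨C, hC⟩ := A_pow2 hb
  have hp := D_poly hb (j+1) 0 (1 / b ^ 2) (((b:ℝ) - 1) / b ^ 2) C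
  rw [D_congr hb (g := A b (fun y => y ^ 2)) _ (fun x _ => by rw [hC]; ring)] at hp
  rw [hp, D_scale, D_scale] at h
  change mo b (j+1) 2 = _ at h
  field_simp at h
  ring_nf at h ⊢
  linarith

lemma mo3_rec {b : ℕ} (hb : 2 ≤ b) (j : ℕ) :
    ((b:ℝ) ^ 4 - b + 1) * mo b (j+1) 3 = 3 * b * (b - 1) / 2 * mo b (j+1) 2
      + b * (b - 1) * (2 * b - 1) / 2 * mo b (j+1) 1 + mo b j 3 := by
  have hb0 : (0:ℝ) < b := by exact_mod_cast (by omega : 0 < b)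
  have h := D_rec hb j (bd_pow 3)
  obtain ⟨C, hC⟩ := A_pow3 hb
  have hp := D_poly hb (j+1) (1 / b ^ 3) (3 * ((b:ℝ) - 1) / (2 * b ^ 3))
    (((b:ℝ) - 1) * (2 * b - 1) / (2 * b ^ 3)) C
  rw [D_congr hb (g := A b (fun y => y ^ 3)) _ (fun x _ => by rw [hC])] at hp
  rw [hp, D_scale, D_scale] at h
  change mo b (j+1) 3 = _ at h
  field_simp at h
  ring_nf at h ⊢
  linarith

lemma irwin_expand {b : ℕ} (hb : 2 ≤ b) (j : ℕ) :
    irwinSum b 0 (j+1) = b * Real.log b - (zetaR 2 / b * mo b j 1 - zetaR 3 / b ^ 2 * mo b j 2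
      + zetaR 4 / b ^ 3 * mo b j 3 + D b j (fun y => rem (y / b))) / b := by
  have hb2 : (2:ℝ) ≤ b := by exact_mod_cast hb
  rw [irwin_exact hb]
  congr 2
  have h1 := (bd_pow 1).smul (zetaR 2 / b)
  have h2 := (bd_pow 2).smul (-(zetaR 3 / b ^ 2))
  have h3 := (bd_pow 3).smul (zetaR 4 / b ^ 3)
  have h4 : Bd (fun y => rem (y / b)) := (rem_Lp (by linarith)).bd
  have e := D_congr hb j (f := fun y => phi (y / b)) (g := fun y => (zetaR 4 / b ^ 3 * y ^ 3 +
    (-(zetaR 3 / b ^ 2) * y ^ 2 + (zetaR 2 / b * y ^ 1 + 0))) + rem (y / b)) (fun x _ => by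
      unfold rem; ring)
  rw [e, D_add hb j (h3.add (h2.add (h1.add (Bd.const 0)))) h4, D_poly hb]
  ring

/-- first order jets at the origin -/
def J2 (f : ℝ → ℝ) (a c : ℝ) : Prop :=
  (fun x => f x - (a + c * x)) =O[nhds 0] fun x : ℝ => x ^ 2

lemma cont_isBigO {f : ℝ → ℝ} (hf : ContinuousAt f 0) :
    f =O[nhds 0] fun _ : ℝ => (1:ℝ) := hf.isBigO_one ℝ

lemma pow_big {m n : ℕ} (h : n ≤ m) : (fun x : ℝ => x ^ m) =O[nhds 0] fun x : ℝ => x ^ n := by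
  have := (isBigO_refl (fun x : ℝ => x ^ n) (nhds 0)).mul
    (cont_isBigO (f := fun x => x ^ (m - n)) (by fun_prop))
  simp only [mul_one, ← pow_add, Nat.add_sub_cancel' h] at this
  exact this

lemma J2.mul {f g : ℝ → ℝ} {a c a' c' : ℝ} (hf : J2 f a c) (hg : J2 g a' c')
    (hgc : ContinuousAt g 0) : J2 (fun x => f x * g x) (a * a') (a * c' + c * a') := by
  unfold J2 at *
  have h1 : (fun x => (f x - (a + c * x)) * g x) =O[nhds 0] fun x : ℝ => x ^ 2 * 1 :=
    hf.mul (cont_isBigO hgc)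
  have h2 : (fun x => (a + c * x) * (g x - (a' + c' * x))) =O[nhds 0] fun x : ℝ => 1 * x ^ 2 :=
    (cont_isBigO (f := fun x => a + c * x) (by fun_prop)).mul hg
  have h3 : (fun x : ℝ => (c * c') * x ^ 2) =O[nhds 0] fun x : ℝ => x ^ 2 :=
    (isBigO_refl _ _).const_mul_left _
  simp only [mul_one, one_mul] at h1 h2
  refine ((h1.add h2).add h3).congr_left fun x => ?_
  ring

/-- `1/(1-x+x^2)` -/
noncomputable def q (x : ℝ) : ℝ := (1 - x + x ^ 2)⁻¹

lemma q_ne (x : ℝ) : 1 - x + x ^ 2 ≠ 0 := by nlinarith [sq_nonneg (x - 1/2)]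

lemma q_cont : ContinuousAt q 0 := by
  unfold q
  exact ContinuousAt.inv₀ (by fun_prop) (by norm_num)

lemma q_jet (n : ℕ) : (fun x => q x ^ n - (1 + n * x + (n * (n - 1) / 2) * x ^ 2
    + ((n:ℝ) * (n - 1) * (n - 2) / 6 - n) * x ^ 3)) =O[nhds 0] fun x : ℝ => x ^ 4 := by
  induction n with
  | zero => simpa using isBigO_zero _ _
  | succ n ih =>
    have h1 := ih.mul (cont_isBigO q_cont)
    have h2 : (fun x => x ^ 4 * (q x * (-1 + x) * (1 + n * x + (n * (n - 1) / 2) * x ^ 2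
        + ((n:ℝ) * (n - 1) * (n - 2) / 6 - n) * x ^ 3))) =O[nhds 0] fun x : ℝ => x ^ 4 * 1 := by
      refine (isBigO_refl _ _).mul (cont_isBigO ?_)
      have := q_cont
      fun_prop
    simp only [mul_one] at h1 h2
    have h4 : (fun x => x ^ 4 * (-(n * (n - 1) / 2) * x + ((n:ℝ) * (n - 1) * (n - 2) / 6 - n)
        * (1 - x ^ 2) - n)) =O[nhds 0]
        fun x : ℝ => x ^ 4 * 1 := by
      refine (isBigO_refl _ _).mul (cont_isBigO ?_)
      fun_prop
    simp only [mul_one] at h4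
    refine ((h1.add h2).add h4).congr_left fun x => ?_
    have hq : q x * (-1 + x) * x ^ 4 = q x - (1 + x - x ^ 3) := by
      unfold q
      have := q_ne x
      field_simp
      ring
    have e : x ^ 4 * (q x * (-1 + x) * (1 + n * x + (n * (n - 1) / 2) * x ^ 2
        + ((n:ℝ) * (n - 1) * (n - 2) / 6 - n) * x ^ 3)) =
        (q x - (1 + x - x ^ 3)) * (1 + n * x + (n * (n - 1) / 2) * x ^ 2
        + ((n:ℝ) * (n - 1) * (n - 2) / 6 - n) * x ^ 3) := by rw [← hq]; ring
    rw [e]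
    push_cast
    ring

lemma q_J2 (n : ℕ) : J2 (fun x => q x ^ n) 1 n := by
  have h1 := (q_jet n).trans (pow_big (by norm_num : 2 ≤ 4))
  have h2 : (fun x => x ^ 2 * ((n * (n - 1) / 2)
    + ((n:ℝ) * (n - 1) * (n - 2) / 6 - n) * x)) =O[nhds 0] fun x : ℝ => x ^ 2 * 1 := by
    refine (isBigO_refl _ _).mul (cont_isBigO ?_)
    fun_prop
  simp only [mul_one] at h2
  refine (h1.add h2).congr_left fun x => ?_
  ring

/-- `1/(1-x^2+x^3)` -/
noncomputable def w (x : ℝ) : ℝ := (1 - x ^ 2 + x ^ 3)⁻¹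

lemma w_cont : ContinuousAt w 0 := by
  unfold w
  exact ContinuousAt.inv₀ (by fun_prop) (by norm_num)

lemma w_J2 : J2 w 1 0 := by
  have h2 : (fun x => x ^ 2 * ((1 - x) * w x)) =O[nhds 0] fun x : ℝ => x ^ 2 * 1 := by
    refine (isBigO_refl _ _).mul (cont_isBigO ?_)
    have := w_cont
    fun_prop
  simp only [mul_one] at h2
  refine h2.congr' ?_ (EventuallyEq.refl _ _)
  have hc : ContinuousAt (fun x : ℝ => 1 - x ^ 2 + x ^ 3) 0 := by fun_prop
  have := hc.eventually_ne (y := 0) (by norm_num)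
  filter_upwards [this] with x hx
  unfold w
  field_simp
  ring

lemma one_sub_J2 : J2 (fun x => (1 - x) ^ 2) 1 (-2) := by
  refine (isBigO_refl _ _).congr_left fun x => ?_
  ring

/-- `1/(1-x^3+x^4)` -/
noncomputable def v (x : ℝ) : ℝ := (1 - x ^ 3 + x ^ 4)⁻¹

lemma v_cont : ContinuousAt v 0 := by
  unfold v
  exact ContinuousAt.inv₀ (by fun_prop) (by norm_num)

/-- first function expansion -/
lemma T1_jet (k : ℕ) : (fun x => (1 - x) * q x ^ (k+1) - (1 + k * x
    + ((k:ℝ) ^ 2 - k - 2) / 2 * x ^ 2 + ((k:ℝ) ^ 3 - 3 * k ^ 2 - 10 * k - 6) / 6 * x ^ 3))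
    =O[nhds 0] fun x : ℝ => x ^ 4 := by
  have h1 := (cont_isBigO (f := fun x => 1 - x) (by fun_prop)).mul (q_jet (k+1))
  have h2 : (fun x : ℝ => -(((k+1:ℕ):ℝ) * ((k+1:ℕ) - 1) * ((k+1:ℕ) - 2) / 6 - (k+1:ℕ)) * x ^ 4)
    =O[nhds 0] fun x : ℝ => x ^ 4 := (isBigO_refl _ _).const_mul_left _
  simp only [one_mul] at h1
  refine (h1.add h2).congr_left fun x => ?_
  push_cast
  ring

lemma T2_jet (k : ℕ) : (fun x => w x * ((1 - x) ^ 2 * q x ^ (k+1))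
    + x * (w x * (w x * ((1 - x) ^ 2 * q x ^ k))) - (1 + k * x)) =O[nhds 0] fun x : ℝ => x ^ 2 := by
  have hq : ∀ n : ℕ, ContinuousAt (fun x => q x ^ n) 0 := fun n => q_cont.pow n
  have hq' : ∀ n : ℕ, ContinuousAt (fun x => (1 - x) ^ 2 * q x ^ n) 0 := fun n => by
    have := hq n
    fun_prop
  have h1 := w_J2.mul (one_sub_J2.mul (q_J2 (k+1)) (hq _)) (hq' _)
  have h2 := w_J2.mul (w_J2.mul (one_sub_J2.mul (q_J2 k) (hq _)) (hq' _)) (w_cont.mul (hq' _))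
  unfold J2 at h1 h2
  have h3 := ((cont_isBigO (f := fun x => x) (by fun_prop)).mul h2)
  simp only [one_mul] at h3
  have h4 : (fun x : ℝ => (k - 2:ℝ) * x ^ 2)
    =O[nhds 0] fun x : ℝ => x ^ 2 := (isBigO_refl _ _).const_mul_left _
  refine ((h1.add h3).add h4).congr_left fun x => ?_
  push_cast
  ring

lemma T3_jet (n : ℕ) : (fun x => v x * ((1 - x) ^ 2 * (2 - x) / 2 * q x ^ n) - 1)
    =O[nhds 0] fun x : ℝ => x := by
  have hd : DifferentiableAt ℝ (fun x => v x * ((1 - x) ^ 2 * (2 - x) / 2 * q x ^ n)) 0 := by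
    have h1 : DifferentiableAt ℝ v 0 := by
      unfold v
      exact DifferentiableAt.inv (by fun_prop) (by norm_num)
    have h2 : DifferentiableAt ℝ q 0 := by
      unfold q
      exact DifferentiableAt.inv (by fun_prop) (by norm_num)
    fun_prop
  have := hd.isBigO_sub
  simpa [v, q] using this

lemma X_tendsto : Tendsto (fun b : ℕ => (b:ℝ)⁻¹) atTop (nhds 0) :=
  tendsto_inv_atTop_nhds_zero_nat

lemma mo1_x {b : ℕ} (hb : 2 ≤ b) (j : ℕ) :
    mo b j 1 = -(1 / 2) * ((b:ℝ)⁻¹ ^ (2 * j + 1) * (1 - (b:ℝ)⁻¹) * q (b:ℝ)⁻¹ ^ (j + 2)) := by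
  have hb2 : (2:ℝ) ≤ b := by exact_mod_cast hb
  have hb0 : (0:ℝ) < b := by linarith
  rw [mo1_eq hb]
  have hx0 : 0 < (b:ℝ)⁻¹ := by positivity
  have hB : (b:ℝ) = ((b:ℝ)⁻¹)⁻¹ := (inv_inv _).symm
  set x := (b:ℝ)⁻¹ with hx
  rw [hB]
  have hq : 0 < 1 - x + x ^ 2 := by nlinarith [sq_nonneg (x - 1/2)]
  have e : (x⁻¹) ^ 2 - x⁻¹ + 1 = (1 - x + x ^ 2) / x ^ 2 := by field_simp
  rw [e, q, div_pow, inv_pow (1 - x + x ^ 2), ← pow_mul]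
  have e2 : x ^ (2 * (j + 2)) = x ^ (2 * j + 1) * x ^ 3 := by ring
  rw [e2]
  field_simp

lemma mo2_x {b : ℕ} (hb : 2 ≤ b) (j : ℕ) :
    mo b (j+1) 2 = w (b:ℝ)⁻¹ * ((b:ℝ)⁻¹ * (1 - (b:ℝ)⁻¹) * mo b (j+1) 1
      + (b:ℝ)⁻¹ ^ 3 * mo b j 2) := by
  have hb2 : (2:ℝ) ≤ b := by exact_mod_cast hb
  have hb0 : (0:ℝ) < b := by linarith
  have h := mo2_rec hb j
  have hne : 0 < (b:ℝ) ^ 3 - b + 1 := by nlinarith [sq_nonneg ((b:ℝ) - 1)]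
  have e : w (b:ℝ)⁻¹ = b ^ 3 / ((b:ℝ) ^ 3 - b + 1) := by
    unfold w
    have : 1 - (b:ℝ)⁻¹ ^ 2 + (b:ℝ)⁻¹ ^ 3 = ((b:ℝ) ^ 3 - b + 1) / b ^ 3 := by field_simp
    rw [this, inv_div]
  rw [e, div_mul_eq_mul_div, eq_div_iff hne.ne', mul_comm, h]
  field_simp

lemma mo3_x {b : ℕ} (hb : 2 ≤ b) (j : ℕ) :
    mo b (j+1) 3 = v (b:ℝ)⁻¹ * (3 / 2 * ((b:ℝ)⁻¹ ^ 2 * (1 - (b:ℝ)⁻¹)) * mo b (j+1) 2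
      + (b:ℝ)⁻¹ * (1 - (b:ℝ)⁻¹) * (2 - (b:ℝ)⁻¹) / 2 * mo b (j+1) 1
      + (b:ℝ)⁻¹ ^ 4 * mo b j 3) := by
  have hb2 : (2:ℝ) ≤ b := by exact_mod_cast hb
  have hb0 : (0:ℝ) < b := by linarith
  have h := mo3_rec hb j
  have hne : 0 < (b:ℝ) ^ 4 - b + 1 := by
    have : (0:ℝ) ≤ b * (b ^ 3 - 1) := by
      have : (1:ℝ) ≤ b ^ 3 := one_le_pow₀ (by linarith)
      nlinarith
    nlinarith
  have e : v (b:ℝ)⁻¹ = b ^ 4 / ((b:ℝ) ^ 4 - b + 1) := by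
    unfold v
    have : 1 - (b:ℝ)⁻¹ ^ 3 + (b:ℝ)⁻¹ ^ 4 = ((b:ℝ) ^ 4 - b + 1) / b ^ 4 := by field_simp
    rw [this, inv_div]
  rw [e, div_mul_eq_mul_div, eq_div_iff hne.ne', mul_comm, h]
  field_simp

lemma mo_big (j i : ℕ) (hi : 2 ≤ i) :
    (fun b : ℕ => mo b j i) =O[atTop] fun b : ℕ => (b:ℝ)⁻¹ ^ (2 * j + 2) := by
  refine IsBigO.of_bound (4 ^ (j+1) * (2 * i)) ?_
  filter_upwards [eventually_ge_atTop 2] with b hb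
  have hb2 : (2:ℝ) ≤ b := by exact_mod_cast hb
  have hb0 : (0:ℝ) < b := by linarith
  rw [Real.norm_eq_abs, Real.norm_eq_abs, abs_of_pos (by positivity : 0 < (b:ℝ)⁻¹ ^ (2 * j + 2))]
  refine (mo_bound hb j i).trans ?_
  rw [mul_assoc]
  gcongr
  have h1 : (i:ℝ) / (b:ℝ) ^ i / (b:ℝ) ^ (2 * j) ≤ (i:ℝ) / (b:ℝ) ^ 2 / (b:ℝ) ^ (2 * j) := by
    gcongr
    linarith
  have h2 : (i:ℝ) / (b:ℝ) ^ 2 / (b:ℝ) ^ (2 * j) = i / (b:ℝ) ^ (2 * j + 2) := by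
    rw [div_div, ← pow_add, add_comm]
  rw [inv_pow, ← div_eq_mul_inv]
  rw [h2] at h1
  have : 2 * (i:ℝ) / b ^ (2 * j + 2) = i / (b:ℝ) ^ (2 * j + 2) + i / (b:ℝ) ^ (2 * j + 2) := by ring
  rw [this]
  gcongr

lemma rem_big (j : ℕ) :
    (fun b : ℕ => D b j (fun y => rem (y / b))) =O[atTop] fun b : ℕ => (b:ℝ)⁻¹ ^ (2 * j + 6) := by
  have hz : 0 ≤ zetaR 4 := by
    unfold zetaR
    exact tsum_nonneg fun n => by positivity
  refine IsBigO.of_bound (4 ^ (j+1) * (14 * zetaR 4)) ?_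
  filter_upwards [eventually_ge_atTop 2] with b hb
  have hb2 : (2:ℝ) ≤ b := by exact_mod_cast hb
  have hb0 : (0:ℝ) < b := by linarith
  rw [Real.norm_eq_abs, Real.norm_eq_abs, abs_of_pos (by positivity : 0 < (b:ℝ)⁻¹ ^ (2 * j + 6))]
  refine (D_rem hb j).trans ?_
  rw [mul_assoc]
  gcongr
  have h0 : (b:ℝ) ^ 6 ≤ ((b:ℝ) * b) ^ 4 := by
    have : ((b:ℝ) * b) ^ 4 = b ^ 8 := by ring
    rw [this]
    exact pow_le_pow_right₀ (by linarith) (by norm_num)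
  have h1 : 7 * zetaR 4 / ((b:ℝ) * b) ^ 4 / (b:ℝ) ^ (2 * j) ≤
      7 * zetaR 4 / (b:ℝ) ^ 6 / (b:ℝ) ^ (2 * j) := by
    gcongr
  have h2 : 7 * zetaR 4 / (b:ℝ) ^ 6 / (b:ℝ) ^ (2 * j) = 7 * zetaR 4 / (b:ℝ) ^ (2 * j + 6) := by
    rw [div_div, ← pow_add, add_comm]
  have h3 : 7 * zetaR 4 / (b:ℝ) ^ 4 / (b:ℝ) ^ (2 * j + 2) = 7 * zetaR 4 / (b:ℝ) ^ (2 * j + 6) := by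
    rw [div_div, ← pow_add]
    congr 2
    ring
  rw [inv_pow, ← div_eq_mul_inv, h3]
  rw [h2] at h1
  have : 14 * zetaR 4 / b ^ (2 * j + 6) =
    7 * zetaR 4 / (b:ℝ) ^ (2 * j + 6) + 7 * zetaR 4 / (b:ℝ) ^ (2 * j + 6) := by ring
  rw [this]
  gcongr

lemma E1 (k : ℕ) : (fun b : ℕ => 1 / 2 * ((b:ℝ)⁻¹ ^ (2 * k + 1) *
    ((1 - (b:ℝ)⁻¹) * q (b:ℝ)⁻¹ ^ (k+1) - (1 + k * (b:ℝ)⁻¹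
    + ((k:ℝ) ^ 2 - k - 2) / 2 * (b:ℝ)⁻¹ ^ 2 + ((k:ℝ) ^ 3 - 3 * k ^ 2 - 10 * k - 6) / 6
      * (b:ℝ)⁻¹ ^ 3)))) =O[atTop] fun b : ℕ => (b:ℝ)⁻¹ ^ (2 * k + 5) := by
  have h := (T1_jet k).comp_tendsto X_tendsto
  have h2 := ((isBigO_refl (fun b : ℕ => (b:ℝ)⁻¹ ^ (2 * k + 1)) atTop).mul h).const_mul_left (1/2)
  refine h2.congr_right fun b => ?_
  simp only [Function.comp]
  rw [← pow_add]

lemma cX {f : ℝ → ℝ} (hf : ContinuousAt f 0) :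
    (fun b : ℕ => f (b:ℝ)⁻¹) =O[atTop] fun _ : ℕ => (1:ℝ) :=
  (cont_isBigO hf).comp_tendsto X_tendsto

lemma E2 (i : ℕ) : (fun b : ℕ => mo b (i+2) 2 + 1 / 2 * ((b:ℝ)⁻¹ ^ (2 * i + 6) *
    (1 + ((i+3:ℕ):ℝ) * (b:ℝ)⁻¹))) =O[atTop] fun b : ℕ => (b:ℝ)⁻¹ ^ (2 * i + 8) := by
  have h := (T2_jet (i+3)).comp_tendsto X_tendsto
  have h1 := ((isBigO_refl (fun b : ℕ => (b:ℝ)⁻¹ ^ (2 * i + 6)) atTop).mul h).const_mul_left (-(1/2))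
  have h2 := (cX (f := fun x => w x * w x) (w_cont.mul w_cont)).mul
    ((isBigO_refl (fun b : ℕ => (b:ℝ)⁻¹ ^ 6) atTop).mul (mo_big i 2 le_rfl))
  have h1' := h1.congr_right (g₂ := fun b : ℕ => (b:ℝ)⁻¹ ^ (2 * i + 8)) fun b => by
    simp only [Function.comp]
    rw [← pow_add]
  have h2' := h2.congr_right (g₂ := fun b : ℕ => (b:ℝ)⁻¹ ^ (2 * i + 8)) fun b => by
    rw [one_mul, ← pow_add]
    congr 1
    ring
  refine (h1'.add h2').congr' ?_ (EventuallyEq.refl _ _)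
  filter_upwards [eventually_ge_atTop 2] with b hb
  rw [mo2_x hb (i+1), mo2_x hb i, mo1_x hb, mo1_x hb]
  simp only [Function.comp]
  push_cast
  ring

lemma E3 (i : ℕ) : (fun b : ℕ => mo b (i+2) 3 + 1 / 2 * (b:ℝ)⁻¹ ^ (2 * i + 6))
    =O[atTop] fun b : ℕ => (b:ℝ)⁻¹ ^ (2 * i + 7) := by
  have h := (T3_jet (i+4)).comp_tendsto X_tendsto
  have h1 := ((isBigO_refl (fun b : ℕ => (b:ℝ)⁻¹ ^ (2 * i + 6)) atTop).mul h).const_mul_left (-(1/2))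
  have h2 := (cX (f := fun x => v x * (3 / 2 * (x * (1 - x)))) (by
    have := v_cont
    fun_prop)).mul
    ((isBigO_refl (fun b : ℕ => (b:ℝ)⁻¹ ^ 1) atTop).mul (mo_big (i+2) 2 le_rfl))
  have h3 := (cX (f := fun x => v x * x) (by
    have := v_cont
    fun_prop)).mul
    ((isBigO_refl (fun b : ℕ => (b:ℝ)⁻¹ ^ 3) atTop).mul (mo_big (i+1) 3 (by norm_num)))
  have h1' := h1.congr_right (g₂ := fun b : ℕ => (b:ℝ)⁻¹ ^ (2 * i + 7)) fun b => by
    simp only [Function.comp]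
    rw [← pow_succ]
  have h2' := h2.congr_right (g₂ := fun b : ℕ => (b:ℝ)⁻¹ ^ (2 * i + 7)) fun b => by
    rw [one_mul, ← pow_add]
    congr 1
    ring
  have h3' := h3.congr_right (g₂ := fun b : ℕ => (b:ℝ)⁻¹ ^ (2 * i + 7)) fun b => by
    rw [one_mul, ← pow_add]
    congr 1
    ring
  refine ((h1'.add h2').add h3').congr' ?_ (EventuallyEq.refl _ _)
  filter_upwards [eventually_ge_atTop 2] with b hb
  rw [mo3_x hb (i+1), mo1_x hb]
  simp only [Function.comp]
  ring

end Irwin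

theorem irwin_zero_k_asymptotic (k : ℕ) (hk : 3 ≤ k) :
    (fun b : ℕ => irwinSum b 0 k -
      ((b : ℝ) * Real.log b + zetaR 2 / (2 * (b : ℝ) ^ (2 * k + 1))
        + (k : ℝ) * zetaR 2 / (2 * (b : ℝ) ^ (2 * k + 2))
        + (((k : ℝ) ^ 2 - k - 2) * zetaR 2 - 2 * zetaR 3) / (4 * (b : ℝ) ^ (2 * k + 3))
        + (((k : ℝ) ^ 3 - 3 * (k : ℝ) ^ 2 - 10 * k - 6) * zetaR 2 - 6 * k * zetaR 3
            + 6 * zetaR 4) / (12 * (b : ℝ) ^ (2 * k + 4))))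
      =O[atTop] fun b : ℕ => ((b : ℝ) ^ (2 * k + 5))⁻¹ := by
  obtain ⟨i, rfl⟩ : ∃ i, k = i + 3 := ⟨k - 3, by omega⟩
  simp only [← inv_pow]
  have h1 := (Irwin.E1 (i+3)).const_mul_left (zetaR 2)
  have h2 := ((isBigO_refl (fun b : ℕ => (b:ℝ)⁻¹ ^ 3) atTop).mul
    (Irwin.E2 i)).const_mul_left (zetaR 3)
  have h3 := ((isBigO_refl (fun b : ℕ => (b:ℝ)⁻¹ ^ 4) atTop).mul
    (Irwin.E3 i)).const_mul_left (-zetaR 4)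
  have h4 := ((isBigO_refl (fun b : ℕ => (b:ℝ)⁻¹ ^ 1) atTop).mul
    (Irwin.rem_big (i+2))).const_mul_left (-1)
  have h2' := h2.congr_right (g₂ := fun b : ℕ => (b:ℝ)⁻¹ ^ (2 * (i + 3) + 5)) fun b => by
    rw [← pow_add]
    congr 1
    ring
  have h3' := h3.congr_right (g₂ := fun b : ℕ => (b:ℝ)⁻¹ ^ (2 * (i + 3) + 5)) fun b => by
    rw [← pow_add]
    congr 1
    ring
  have h4' := h4.congr_right (g₂ := fun b : ℕ => (b:ℝ)⁻¹ ^ (2 * (i + 3) + 5)) fun b => by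
    rw [← pow_add]
    congr 1
    ring
  refine (((h1.add h2').add h3').add h4').congr' ?_ (EventuallyEq.refl _ _)
  filter_upwards [eventually_ge_atTop 2] with b hb
  rw [Irwin.irwin_expand hb (i+2), Irwin.mo1_x hb]
  simp only [div_eq_mul_inv, mul_inv, ← inv_pow]
  push_cast
  ring
end
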